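/- For every α > 0 and M > 0, the optimal function in the generalized logarithmic Hardy–Littlewood–Sobolev inequality is unique: if f is admissible with ∫_{ℝ²} f dx = M and ∫_{ℝ²} f log(f/M) dx + α ∫_{ℝ²} V f dx + M(1−α)(1+log π) = (2/M)(α−1) ∬_{ℝ²×ℝ²} f(x) f(y) log|x−y| dx dy, then f = M μ almost everywhere. -/

import Mathlib

open MeasureTheory Real Filter

noncomputable section

/-- The Euclidean plane ℝ². -/
abbrev E2 := EuclideanSpace ℝ (Fin 2)

/-- The probability density μ(x) = 1/(π (1+|x|²)²) on ℝ². -/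
def mu2 (x : E2) : ℝ := 1 / (π * (1 + ‖x‖ ^ 2) ^ 2)

/-- The external potential V(x) = −log μ(x) = 2 log(1+|x|²) + log π. -/
def Vpot (x : E2) : ℝ := 2 * Real.log (1 + ‖x‖ ^ 2) + Real.log π

/-- A function f on ℝ² is admissible if it is measurable, nonnegative a.e., integrable,
and ∫ f |log f|, ∫ V f and ∬ f(x) f(y) |log|x−y|| are all finite. -/
def Admissible (f : E2 → ℝ) : Prop :=
  Measurable f ∧ (∀ᵐ x : E2, 0 ≤ f x) ∧ Integrable f ∧
  Integrable (fun x => f x * |Real.log (f x)|) ∧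
  Integrable (fun x => Vpot x * f x) ∧
  Integrable (fun p : E2 × E2 => f p.1 * f p.2 * |Real.log ‖p.1 - p.2‖|)

/-- The repulsive free energy F⁺_β. -/
def Fplus (β : ℝ) (f : E2 → ℝ) : ℝ :=
  (∫ x, f x * Real.log (f x)) + β * (∫ x, Vpot x * f x)
    - (1 / (4 * π)) * ∫ p : E2 × E2, f p.1 * f p.2 * Real.log ‖p.1 - p.2‖

/-- The attractive free energy F⁻_β. -/
def Fminus (β : ℝ) (f : E2 → ℝ) : ℝ :=
  (∫ x, f x * Real.log (f x)) + β * (∫ x, Vpot x * f x)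
    + (1 / (4 * π)) * ∫ p : E2 × E2, f p.1 * f p.2 * Real.log ‖p.1 - p.2‖

/-!
Stereographic projection identifies the plane with the unit sphere `S²`, and `μ dx` with its
normalised area `σ`. The push-forward of `σ` under the squared distance to a fixed point is uniform
(Archimedes), so integrals of functions of the distance are explicit. In terms of the density
`ρ = f / (M μ)` of `f / M` relative to `σ` and of `L ρ = ∬ ρ ρ log k`, where `k` is a quarter of the
squared distance in `ℝ³`, the equation becomes `Ent ρ + (1 - α) (L ρ + 1) = 0`. It suffices to
deduce that `Ent ρ ≤ 0`, since Jensen's inequality then forces `ρ = 1`. This follows from the two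
inequalities `L ρ ≤ -1`, used for `α ≥ 1`, and `Ent ρ + L ρ + 1 ≥ 0`, used for `α ≤ 1`.

* On the sphere `k = (1 - ⟪x, y⟫) / 2`, and a power series in `⟪x, y⟫` with nonnegative coefficients
  is a positive semidefinite kernel, whose quadratic form is least at the uniform density among
  probability densities. The series of `-log (1 - s)` gives `L ρ ≤ -1`.
* For `β < 1` the Gibbs variational principle bounds `Ent + β L` from below, so it has almost
  minimizers `ρ`. By conformal covariance of `log k`, the barycentre of such a `ρ` is almost `0`: a
  similarity of the plane would otherwise lower the free energy noticeably. Summed over an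
  orthonormal basis of `ℝ³`, the second variation of the free energy along the coordinate functions
  gives `1 + 2 β ∬ ρ ρ ⟪x, y⟫ log k ≥ 0` up to a small error. The series of
  `(1 - s) log (1 - s) + s`, again with nonnegative coefficients, bounds the double integral by
  `L ρ + 1 / 2`, up to a multiple of the squared norm of the barycentre. Hence
  `Ent ρ + β L ρ ≥ -(1 + β) / 2` up to a small error, and one lets the error tend to `0`, then `β`
  to `1`.
-/

open InformationTheory Set
open scoped InnerProductSpace Topology

lemma hasSum_neg_log_one_sub {x : ℝ} (hx : |x| < 1) :
    HasSum (fun n : ℕ => (1 / n : ℝ) * x ^ n) (-log (1 - x)) := by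
  rw [← hasSum_nat_add_iff' 1]
  simpa [div_eq_inv_mul] using hasSum_pow_div_log_of_abs_lt_one hx

lemma hasSum_klFun_one_sub {x : ℝ} (hx : |x| < 1) :
    HasSum (fun n : ℕ => (1 / (n * (n - 1)) : ℝ) * x ^ n) (klFun (1 - x)) := by
  have hlog := hasSum_pow_div_log_of_abs_lt_one hx
  have hdiff := (hlog.mul_left x).sub ((hasSum_nat_add_iff' 1).mpr hlog)
  rw [← hasSum_nat_add_iff' 2]
  convert hdiff using 1
  · funext n
    push_cast
    rw [show (n : ℝ) + 2 - 1 = n + 1 by ring, show (n : ℝ) + 1 + 1 = n + 2 by ring]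
    field_simp
    ring
  · simp [klFun, Finset.sum_range_succ]
    ring

lemma abs_log_one_sub_mul_le {r t : ℝ} (hr : r ∈ Ioo 0 1) (ht : t < 1) :
    |log (1 - r * t)| ≤ |log (1 - t)| := by
  obtain ⟨hr0, hr1⟩ := hr
  rcases le_total t 0 with ht0 | ht0
  · rw [abs_of_nonneg (log_nonneg (by nlinarith)), abs_of_nonneg (log_nonneg (by linarith))]
    exact log_le_log (by nlinarith) (by nlinarith)
  · rw [abs_of_nonpos (log_nonpos (by nlinarith) (by nlinarith)),
      abs_of_nonpos (log_nonpos (by linarith) (by linarith))]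
    exact neg_le_neg (log_le_log (by linarith) (by nlinarith))

lemma klFun_one_sub_mul_le {r t : ℝ} (hr : r ∈ Ioo 0 1) (ht : t < 1) :
    klFun (1 - r * t) ≤ klFun (1 - t) := by
  obtain ⟨hr0, hr1⟩ := hr
  have hconv := convexOn_klFun.2 (x := 1) (y := 1 - t) (by simp) (by simp; linarith)
    (sub_nonneg.2 hr1.le) hr0.le (by ring)
  simp only [smul_eq_mul, klFun_one, mul_zero, zero_add] at hconv
  calc klFun (1 - r * t) = klFun ((1 - r) * 1 + r * (1 - t)) := by ring_nf
    _ ≤ r * klFun (1 - t) := hconv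
    _ ≤ klFun (1 - t) := mul_le_of_le_one_left (klFun_nonneg (by linarith)) hr1.le

section Interaction

variable {Ω : Type*} [MeasurableSpace Ω] {m : Measure Ω}

/-- The quadratic form `∬ h(x) h(y) K(x, y) dm(x) dm(y)` of the kernel `K`. -/
def interaction (m : Measure Ω) (K : Ω → Ω → ℝ) (h : Ω → ℝ) : ℝ :=
  ∫ p, h p.1 * h p.2 * K p.1 p.2 ∂m.prod m

variable {E : Type*} [NormedAddCommGroup E] [InnerProductSpace ℝ E]

/-- The centre of mass in `E` of the density `h`, the points of `Ω` being placed in `E` by `σ`. -/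
def barycenter (m : Measure Ω) (σ : Ω → E) (h : Ω → ℝ) : E :=
  ∫ x, h x • σ x ∂m

lemma norm_inner_le_one {x y : E} (hx : ‖x‖ ≤ 1) (hy : ‖y‖ ≤ 1) : ‖⟪x, y⟫_ℝ‖ ≤ 1 :=
  (norm_inner_le_norm x y).trans (mul_le_one₀ hx (norm_nonneg y) hy)

variable {σ : Ω → E} {h : Ω → ℝ}

lemma aestronglyMeasurable_inner_prod (hσ : AEStronglyMeasurable σ m) :
    AEStronglyMeasurable (fun p : Ω × Ω => ⟪σ p.1, σ p.2⟫_ℝ) (m.prod m) :=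
  hσ.comp_fst.inner hσ.comp_snd

lemma integrable_smul_of_norm_le_one (hσ : AEStronglyMeasurable σ m) (hσ1 : ∀ x, ‖σ x‖ ≤ 1)
    (hh : Integrable h m) : Integrable (fun x => h x • σ x) m :=
  hh.smul_bdd 1 hσ (.of_forall hσ1)

lemma interaction_add_add_interaction_sub {K : Ω → Ω → ℝ} {g : Ω → ℝ}
    (hgg : Integrable (fun p => g p.1 * g p.2 * K p.1 p.2) (m.prod m))
    (hgh : Integrable (fun p => g p.1 * h p.2 * K p.1 p.2) (m.prod m))
    (hhg : Integrable (fun p => h p.1 * g p.2 * K p.1 p.2) (m.prod m))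
    (hhh : Integrable (fun p => h p.1 * h p.2 * K p.1 p.2) (m.prod m)) :
    interaction m K (g + h) + interaction m K (g - h)
      = 2 * interaction m K g + 2 * interaction m K h := by
  have hadd : Integrable (fun p => (g + h) p.1 * (g + h) p.2 * K p.1 p.2) (m.prod m) := by
    refine (((hgg.add hgh).add hhg).add hhh).congr (.of_forall fun p => ?_)
    simp only [Pi.add_apply]
    ring
  have hsub : Integrable (fun p => (g - h) p.1 * (g - h) p.2 * K p.1 p.2) (m.prod m) := by
    refine (((hgg.sub hgh).sub hhg).add hhh).congr (.of_forall fun p => ?_)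
    simp only [Pi.add_apply, Pi.sub_apply]
    ring
  simp only [interaction]
  rw [← integral_add hadd hsub, ← integral_const_mul, ← integral_const_mul,
    ← integral_add (hgg.const_mul 2) (hhh.const_mul 2)]
  congr 1 with p
  simp only [Pi.add_apply, Pi.sub_apply]
  ring

lemma hasSum_interaction {K : ℕ → Ω → Ω → ℝ} {b : ℕ → ℝ} (hh : Integrable h m)
    (hK : ∀ n, AEStronglyMeasurable (fun p : Ω × Ω => K n p.1 p.2) (m.prod m))
    (hbound : ∀ n x y, |K n x y| ≤ b n) (hb : Summable b) :
    HasSum (fun n => interaction m (K n) h) (interaction m (fun x y => ∑' n, K n x y) h) := by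
  have hterm (n : ℕ) : Integrable (fun p => h p.1 * h p.2 * K n p.1 p.2) (m.prod m) :=
    (hh.mul_prod hh).mul_bdd (hK n) (.of_forall fun p => hbound n p.1 p.2)
  have hsummable : Summable fun n => ∫ p, ‖h p.1 * h p.2 * K n p.1 p.2‖ ∂m.prod m := by
    refine .of_nonneg_of_le (fun n => by positivity) (fun n => ?_)
      (hb.mul_left (∫ p, ‖h p.1 * h p.2‖ ∂m.prod m))
    rw [← integral_mul_const]
    refine integral_mono (hterm n).norm ((hh.mul_prod hh).norm.mul_const _) fun p => ?_
    rw [norm_mul (h p.1 * h p.2)]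
    exact mul_le_mul_of_nonneg_left (hbound n p.1 p.2) (norm_nonneg _)
  simpa only [interaction, tsum_mul_left] using
    hasSum_integral_of_summable_integral_norm hterm hsummable

variable [SFinite m]

lemma interaction_inner_pow_nonneg [FiniteDimensional ℝ E] (hσ : AEStronglyMeasurable σ m)
    (hσ1 : ∀ x, ‖σ x‖ ≤ 1) (hh : Integrable h m) (n : ℕ) :
    0 ≤ interaction m (fun x y => ⟪σ x, σ y⟫_ℝ ^ n) h := by
  induction n generalizing h with
  | zero =>
    simp only [interaction, pow_zero, mul_one]
    rw [integral_prod_mul h h]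
    exact mul_self_nonneg _
  | succ n ih =>
    let e := stdOrthonormalBasis ℝ E
    have hcoord (i) : Integrable (fun x => h x * ⟪σ x, e i⟫_ℝ) m :=
      hh.mul_bdd (c := 1) (hσ.inner_const) (.of_forall fun x =>
        norm_inner_le_one (hσ1 x) (e.norm_eq_one i).le)
    have hint (i) : Integrable (fun p : Ω × Ω =>
        h p.1 * ⟪σ p.1, e i⟫_ℝ * (h p.2 * ⟪σ p.2, e i⟫_ℝ) * ⟪σ p.1, σ p.2⟫_ℝ ^ n) (m.prod m) :=
      ((hcoord i).mul_prod (hcoord i)).mul_bdd (c := 1)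
        ((aestronglyMeasurable_inner_prod hσ).pow n) (.of_forall fun p => by
          rw [norm_pow]
          exact pow_le_one₀ (norm_nonneg _) (norm_inner_le_one (hσ1 _) (hσ1 _)))
    have hsum : interaction m (fun x y => ⟪σ x, σ y⟫_ℝ ^ (n + 1)) h
        = ∑ i, interaction m (fun x y => ⟪σ x, σ y⟫_ℝ ^ n) fun x => h x * ⟪σ x, e i⟫_ℝ := by
      simp only [interaction]
      rw [← integral_finsetSum _ fun i _ => hint i]
      refine integral_congr_ae (.of_forall fun p => ?_)
      simp only [pow_succ]
      rw [← e.sum_inner_mul_inner (σ p.1) (σ p.2), Finset.mul_sum, Finset.mul_sum]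
      refine Finset.sum_congr rfl fun i _ => ?_
      rw [real_inner_comm (σ p.2) (e i)]
      ring
    exact hsum ▸ Finset.sum_nonneg fun i _ => ih (hcoord i)

lemma interaction_inner_powerSeries_nonneg [FiniteDimensional ℝ E]
    (hσ : AEStronglyMeasurable σ m) (hσ1 : ∀ x, ‖σ x‖ ≤ 1) (hh : Integrable h m) {c : ℕ → ℝ}
    (hc : ∀ n, 0 ≤ c n) {φ : ℝ → ℝ} (hφ : ∀ x, |x| < 1 → HasSum (fun n => c n * x ^ n) (φ x))
    {r : ℝ} (hr : r ∈ Ioo 0 1) :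
    0 ≤ interaction m (fun x y => φ (r * ⟪σ x, σ y⟫_ℝ)) h := by
  obtain ⟨hr0, hr1⟩ := hr
  have hle (x y : Ω) : |r * ⟪σ x, σ y⟫_ℝ| ≤ r := by
    rw [abs_mul, abs_of_pos hr0]
    exact mul_le_of_le_one_right hr0.le (norm_inner_le_one (hσ1 x) (hσ1 y))
  have hbound (n : ℕ) (x y : Ω) : |c n * (r * ⟪σ x, σ y⟫_ℝ) ^ n| ≤ c n * r ^ n := by
    rw [abs_mul, abs_pow, abs_of_nonneg (hc n)]
    exact mul_le_mul_of_nonneg_left (pow_le_pow_left₀ (abs_nonneg _) (hle x y) n) (hc n)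
  have hsum := hasSum_interaction hh
    (fun n => (((aestronglyMeasurable_inner_prod hσ).const_mul r).pow n).const_mul (c n)) hbound
    (hφ r (by rwa [abs_of_pos hr0])).summable
  simp only [(hφ _ ((hle _ _).trans_lt hr1)).tsum_eq] at hsum
  refine hsum.nonneg fun n => ?_
  have hfactor : interaction m (fun x y => c n * (r * ⟪σ x, σ y⟫_ℝ) ^ n) h
      = c n * r ^ n * interaction m (fun x y => ⟪σ x, σ y⟫_ℝ ^ n) h := by
    rw [interaction, interaction, ← integral_const_mul]
    congr 1 with p
    ring
  rw [hfactor]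
  exact mul_nonneg (mul_nonneg (hc n) (by positivity)) (interaction_inner_pow_nonneg hσ hσ1 hh n)

lemma interaction_inner_powerSeries_nonneg_of_le [FiniteDimensional ℝ E]
    (hσ : AEStronglyMeasurable σ m) (hσ1 : ∀ x, ‖σ x‖ ≤ 1) (hh : Integrable h m)
    (hne : ∀ᵐ p ∂m.prod m, ⟪σ p.1, σ p.2⟫_ℝ ≠ 1) {c : ℕ → ℝ} (hc : ∀ n, 0 ≤ c n)
    {φ : ℝ → ℝ} (hφ : ∀ x, |x| < 1 → HasSum (fun n => c n * x ^ n) (φ x))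
    (hmeas : Measurable φ) (hcont : ContinuousOn φ (Iio 1))
    (hmono : ∀ r ∈ Ioo (0 : ℝ) 1, ∀ t < 1, |φ (r * t)| ≤ |φ t|)
    (hint : Integrable (fun p => h p.1 * h p.2 * φ ⟪σ p.1, σ p.2⟫_ℝ) (m.prod m)) :
    0 ≤ interaction m (fun x y => φ ⟪σ x, σ y⟫_ℝ) h := by
  have hlt : ∀ᵐ p ∂m.prod m, ⟪σ p.1, σ p.2⟫_ℝ < 1 := by
    filter_upwards [hne] with p hp
    exact ((le_abs_self _).trans (norm_inner_le_one (hσ1 _) (hσ1 _))).lt_of_ne hp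
  have hlim : Tendsto (fun r : ℝ => interaction m (fun x y => φ (r * ⟪σ x, σ y⟫_ℝ)) h)
      (𝓝[<] 1) (𝓝 (interaction m (fun x y => φ ⟪σ x, σ y⟫_ℝ) h)) := by
    refine tendsto_integral_filter_of_dominated_convergence _ (.of_forall fun r => ?_) ?_
      hint.norm ?_
    · exact (hh.mul_prod hh).aestronglyMeasurable.mul (hmeas.comp_aemeasurable
        ((aestronglyMeasurable_inner_prod hσ).const_mul r).aemeasurable).aestronglyMeasurable
    · filter_upwards [Ioo_mem_nhdsLT one_pos] with r hr
      filter_upwards [hlt] with p hp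
      rw [norm_mul, norm_mul (h p.1 * h p.2)]
      exact mul_le_mul_of_nonneg_left (hmono r hr _ hp) (norm_nonneg _)
    · filter_upwards [hlt] with p hp
      have hmul : Tendsto (fun r : ℝ => r * ⟪σ p.1, σ p.2⟫_ℝ) (𝓝[<] 1) (𝓝 ⟪σ p.1, σ p.2⟫_ℝ) := by
        have hid : Tendsto id (𝓝[<] (1 : ℝ)) (𝓝 1) := nhdsWithin_le_nhds
        simpa using hid.mul_const ⟪σ p.1, σ p.2⟫_ℝ
      exact ((hcont.continuousAt (Iio_mem_nhds hp)).tendsto.comp hmul).const_mul _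
  refine ge_of_tendsto hlim ?_
  filter_upwards [Ioo_mem_nhdsLT one_pos] with r hr
  exact interaction_inner_powerSeries_nonneg hσ hσ1 hh hc hφ hr

lemma interaction_inner_eq_norm_barycenter_sq [CompleteSpace E] (hσ : AEStronglyMeasurable σ m)
    (hσ1 : ∀ x, ‖σ x‖ ≤ 1) (hh : Integrable h m) :
    interaction m (fun x y => ⟪σ x, σ y⟫_ℝ) h = ‖barycenter m σ h‖ ^ 2 := by
  have hsmul := integrable_smul_of_norm_le_one hσ hσ1 hh
  have hint : Integrable (fun p : Ω × Ω => h p.1 * h p.2 * ⟪σ p.1, σ p.2⟫_ℝ) (m.prod m) :=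
    (hh.mul_prod hh).mul_bdd (c := 1) (aestronglyMeasurable_inner_prod hσ)
      (.of_forall fun p => norm_inner_le_one (hσ1 _) (hσ1 _))
  have hinner (x : Ω) : ∫ y, h x * h y * ⟪σ x, σ y⟫_ℝ ∂m = ⟪h x • σ x, barycenter m σ h⟫_ℝ := by
    rw [barycenter, ← integral_inner hsmul]
    congr 1 with y
    rw [real_inner_smul_left, real_inner_smul_right, mul_assoc]
  rw [interaction, integral_prod _ hint]
  simp only [hinner, real_inner_comm (barycenter m σ h)]
  rw [integral_inner hsmul, ← barycenter, real_inner_self_eq_norm_sq]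

end Interaction

section Density

variable {Ω : Type*} [MeasurableSpace Ω] {m : Measure Ω}

/-- Probability densities with respect to `m` whose entropy relative to `m` is finite. -/
structure IsFiniteEntropyDensity (m : Measure Ω) (ρ : Ω → ℝ) : Prop where
  nonneg : 0 ≤ᵐ[m] ρ
  integrable : Integrable ρ m
  integral_eq_one : ∫ x, ρ x ∂m = 1
  integrable_mul_log : Integrable (fun x => ρ x * log (ρ x)) m

/-- The entropy of the density `ρ` relative to `m`, with the sign for which it is nonnegative
when `m` is a probability measure. -/
def entropy (m : Measure Ω) (ρ : Ω → ℝ) : ℝ :=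
  ∫ x, ρ x * log (ρ x) ∂m

lemma mul_le_mul_log_sub_add_exp {s : ℝ} (hs : 0 ≤ s) (t : ℝ) :
    s * t ≤ s * log s - s + exp t := by
  have h := klFun_nonneg (div_nonneg hs (exp_pos t).le)
  rcases hs.eq_or_lt with rfl | hs
  · simp [(exp_pos t).le]
  · rw [klFun, log_div hs.ne' (exp_pos t).ne', log_exp] at h
    have := mul_nonneg (exp_pos t).le h
    field_simp at this
    linarith

lemma integrable_mul_comp_of_abs_le {ρ w : Ω → ℝ} (hρ : Integrable ρ m)
    (hw : AEStronglyMeasurable w m) {C : ℝ} (hC : ∀ x, |w x| ≤ C) {φ : ℝ → ℝ} (hφ : Continuous φ) :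
    Integrable (fun x => ρ x * φ (w x)) m := by
  obtain ⟨B, hB⟩ := isCompact_Icc.exists_bound_of_continuousOn (s := Icc (-C) C) hφ.continuousOn
  exact hρ.mul_bdd (hφ.comp_aestronglyMeasurable hw) (.of_forall fun x => hB _ (abs_le.1 (hC x)))

namespace IsFiniteEntropyDensity

variable {ρ w : Ω → ℝ} {K : Ω → Ω → ℝ}

lemma one [IsProbabilityMeasure m] : IsFiniteEntropyDensity m fun _ => (1 : ℝ) :=
  ⟨.of_forall fun _ => zero_le_one, integrable_const 1, by simp, by simp⟩

lemma integrable_klFun [IsFiniteMeasure m] (hρ : IsFiniteEntropyDensity m ρ) :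
    Integrable (fun x => klFun (ρ x)) m :=
  (hρ.integrable_mul_log.add (integrable_const 1)).sub hρ.integrable

lemma integral_klFun [IsProbabilityMeasure m] (hρ : IsFiniteEntropyDensity m ρ) :
    ∫ x, klFun (ρ x) ∂m = entropy m ρ := by
  have hadd : Integrable (fun x => ρ x * log (ρ x) + 1) m :=
    hρ.integrable_mul_log.add (integrable_const 1)
  simp only [klFun]
  rw [integral_sub hadd hρ.integrable, integral_add hρ.integrable_mul_log (integrable_const 1),
    hρ.integral_eq_one]
  simp [entropy]

lemma entropy_nonneg [IsProbabilityMeasure m] (hρ : IsFiniteEntropyDensity m ρ) :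
    0 ≤ entropy m ρ := by
  rw [← hρ.integral_klFun]
  exact integral_nonneg_of_ae (hρ.nonneg.mono fun x hx => klFun_nonneg hx)

lemma ae_eq_one_of_entropy_nonpos [IsProbabilityMeasure m] (hρ : IsFiniteEntropyDensity m ρ)
    (h : entropy m ρ ≤ 0) : ρ =ᵐ[m] 1 := by
  have hzero := h.antisymm hρ.entropy_nonneg
  rw [← hρ.integral_klFun, integral_eq_zero_iff_of_nonneg_ae
    (hρ.nonneg.mono fun x hx => klFun_nonneg hx) hρ.integrable_klFun] at hzero
  filter_upwards [hzero, hρ.nonneg] with x hx hx0 using (klFun_eq_zero_iff hx0).1 hx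

lemma integrable_mul_of_integrable_exp_abs (hρ : IsFiniteEntropyDensity m ρ) {g : Ω → ℝ}
    (hg : AEStronglyMeasurable g m) (hexp : Integrable (fun x => exp |g x|) m) :
    Integrable (fun x => ρ x * g x) m := by
  refine ((hρ.integrable_mul_log.sub hρ.integrable).add hexp).mono'
    (hρ.integrable.aestronglyMeasurable.mul hg) ?_
  filter_upwards [hρ.nonneg] with x hx
  rw [norm_mul, norm_of_nonneg hx]
  exact mul_le_mul_log_sub_add_exp hx _

lemma integral_mul_le_entropy_add_log (hρ : IsFiniteEntropyDensity m ρ) {g : Ω → ℝ}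
    (hg : Integrable (fun x => ρ x * g x) m) (hexp : Integrable (fun x => exp (g x)) m)
    (hpos : 0 < ∫ x, exp (g x) ∂m) :
    ∫ x, ρ x * g x ∂m ≤ entropy m ρ + log (∫ x, exp (g x) ∂m) := by
  set Z := ∫ x, exp (g x) ∂m with hZ
  have hlow : Integrable (fun x => ρ x * g x - ρ x * log Z) m :=
    hg.sub (hρ.integrable.mul_const _)
  have hent : Integrable (fun x => ρ x * log (ρ x) - ρ x) m :=
    hρ.integrable_mul_log.sub hρ.integrable
  have h : ∫ x, (ρ x * g x - ρ x * log Z) ∂m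
      ≤ ∫ x, (ρ x * log (ρ x) - ρ x + exp (g x) / Z) ∂m := by
    refine integral_mono_ae hlow (hent.add (hexp.div_const Z)) ?_
    filter_upwards [hρ.nonneg] with x hx
    have := mul_le_mul_log_sub_add_exp hx (g x - log Z)
    rwa [exp_sub, exp_log hpos, mul_sub] at this
  rw [integral_sub hg (hρ.integrable.mul_const _), integral_add hent (hexp.div_const Z),
    integral_sub hρ.integrable_mul_log hρ.integrable, integral_mul_const, integral_div, ← hZ,
    div_self hpos.ne', hρ.integral_eq_one] at h
  rw [entropy]
  linarith

lemma integrable_interaction [SFinite m] (hρ : IsFiniteEntropyDensity m ρ)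
    (hK : AEStronglyMeasurable (fun p : Ω × Ω => K p.1 p.2) (m.prod m))
    (hexp : Integrable (fun p : Ω × Ω => ρ p.1 * exp |K p.1 p.2|) (m.prod m)) :
    Integrable (fun p : Ω × Ω => ρ p.1 * ρ p.2 * K p.1 p.2) (m.prod m) := by
  refine (((hρ.integrable.mul_prod hρ.integrable_mul_log).sub
    (hρ.integrable.mul_prod hρ.integrable)).add hexp).mono'
    ((hρ.integrable.mul_prod hρ.integrable).aestronglyMeasurable.mul hK) ?_
  filter_upwards [Measure.quasiMeasurePreserving_fst.ae hρ.nonneg,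
    Measure.quasiMeasurePreserving_snd.ae hρ.nonneg] with p hp1 hp2
  rw [norm_mul, norm_mul, norm_of_nonneg hp1, norm_of_nonneg hp2]
  calc ρ p.1 * ρ p.2 * |K p.1 p.2|
      ≤ ρ p.1 * (ρ p.2 * log (ρ p.2) - ρ p.2 + exp |K p.1 p.2|) := by
        rw [mul_assoc]
        exact mul_le_mul_of_nonneg_left (mul_le_mul_log_sub_add_exp hp2 _) hp1
    _ = ρ p.1 * (ρ p.2 * log (ρ p.2)) - ρ p.1 * ρ p.2 + ρ p.1 * exp |K p.1 p.2| := by ring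

/-- The Gibbs variational principle, integrated over the position of a particle interacting with
an independent copy of itself. -/
lemma interaction_le_entropy_add_log [SFinite m] (hρ : IsFiniteEntropyDensity m ρ) {Z : ℝ}
    (hZ : 0 < Z) (hK : ∀ x, AEStronglyMeasurable (K x) m)
    (hexp : ∀ x, Integrable (fun y => exp |K x y|) m)
    (hpart : ∀ x, ∫ y, exp (K x y) ∂m = Z)
    (hint : Integrable (fun p => ρ p.1 * ρ p.2 * K p.1 p.2) (m.prod m)) :
    interaction m K ρ ≤ entropy m ρ + log Z := by
  have hfibre (x : Ω) : ∫ y, ρ y * K x y ∂m ≤ entropy m ρ + log Z := by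
    rw [← hpart x]
    refine hρ.integral_mul_le_entropy_add_log
      (hρ.integrable_mul_of_integrable_exp_abs (hK x) (hexp x)) ?_ (hZ.trans_eq (hpart x).symm)
    refine (hexp x).mono' (continuous_exp.comp_aestronglyMeasurable (hK x)) (.of_forall fun y => ?_)
    rw [norm_of_nonneg (exp_pos _).le]
    exact exp_le_exp.2 (le_abs_self _)
  have hprod := hint.integral_prod_left
  simp only [mul_assoc, integral_const_mul] at hprod
  calc interaction m K ρ = ∫ x, ρ x * ∫ y, ρ y * K x y ∂m ∂m := by
        rw [interaction, integral_prod _ hint]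
        simp only [mul_assoc, integral_const_mul]
    _ ≤ ∫ x, ρ x * (entropy m ρ + log Z) ∂m := by
        refine integral_mono_ae hprod (hρ.integrable.mul_const _) ?_
        filter_upwards [hρ.nonneg] with x hx using mul_le_mul_of_nonneg_left (hfibre x) hx
    _ = entropy m ρ + log Z := by rw [integral_mul_const, hρ.integral_eq_one, one_mul]

lemma integrable_add_mul_mul_log (hρ : IsFiniteEntropyDensity m ρ)
    (hw : AEStronglyMeasurable w m) (hw1 : ∀ x, |w x| ≤ 1) :
    Integrable (fun x => (ρ + ρ * w) x * log ((ρ + ρ * w) x)) m := by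
  have hlog := integrable_mul_comp_of_abs_le hρ.integrable_mul_log hw hw1
    (φ := fun s => 1 + s) (by fun_prop)
  have hmul := integrable_mul_comp_of_abs_le hρ.integrable hw hw1
    (φ := fun s => (1 + s) * log (1 + s)) (continuous_mul_log.comp (by fun_prop))
  refine (hlog.add hmul).congr (.of_forall fun x => ?_)
  have := negMulLog_mul (ρ x) (1 + w x)
  simp only [negMulLog, mul_add, mul_one, Pi.add_apply, Pi.mul_apply] at this ⊢
  linarith

lemma add_mul (hρ : IsFiniteEntropyDensity m ρ) (hw : AEStronglyMeasurable w m)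
    (hw1 : ∀ x, |w x| ≤ 1) (hw0 : ∫ x, ρ x * w x ∂m = 0) :
    IsFiniteEntropyDensity m (ρ + ρ * w) := by
  have hρw : Integrable (ρ * w) m :=
    integrable_mul_comp_of_abs_le hρ.integrable hw hw1 continuous_id
  refine ⟨?_, hρ.integrable.add hρw, ?_, hρ.integrable_add_mul_mul_log hw hw1⟩
  · filter_upwards [hρ.nonneg] with x hx
    have : 0 ≤ ρ x * (1 + w x) := mul_nonneg hx (by linarith [(abs_le.1 (hw1 x)).1])
    simpa [mul_add] using this
  · rw [integral_add' hρ.integrable hρw, hρ.integral_eq_one]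
    simpa using hw0

lemma sub_mul (hρ : IsFiniteEntropyDensity m ρ) (hw : AEStronglyMeasurable w m)
    (hw1 : ∀ x, |w x| ≤ 1) (hw0 : ∫ x, ρ x * w x ∂m = 0) :
    IsFiniteEntropyDensity m (ρ - ρ * w) := by
  simpa [sub_eq_add_neg] using
    hρ.add_mul (w := -w) hw.neg (by simpa using hw1) (by simp [integral_neg, hw0])

lemma entropy_add_mul_add_entropy_sub_mul (hρ : IsFiniteEntropyDensity m ρ)
    (hw : AEStronglyMeasurable w m) (hw1 : ∀ x, |w x| ≤ 1) :
    entropy m (ρ + ρ * w) + entropy m (ρ - ρ * w) = 2 * entropy m ρ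
      + ∫ x, ρ x * ((1 + w x) * log (1 + w x) + (1 - w x) * log (1 - w x)) ∂m := by
  have hadd := hρ.integrable_add_mul_mul_log hw hw1
  have hsub : Integrable (fun x => (ρ - ρ * w) x * log ((ρ - ρ * w) x)) m := by
    simpa [sub_eq_add_neg] using
      hρ.integrable_add_mul_mul_log (w := -w) hw.neg (by simpa using hw1)
  have hmul := integrable_mul_comp_of_abs_le hρ.integrable hw hw1
    (φ := fun s => (1 + s) * log (1 + s) + (1 - s) * log (1 - s))
    ((continuous_mul_log.comp (by fun_prop)).add (continuous_mul_log.comp (by fun_prop)))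
  simp only [entropy]
  rw [← integral_add hadd hsub, ← integral_const_mul,
    ← integral_add (hρ.integrable_mul_log.const_mul 2) hmul]
  congr 1 with x
  have hplus := negMulLog_mul (ρ x) (1 + w x)
  have hminus := negMulLog_mul (ρ x) (1 - w x)
  simp only [negMulLog, mul_add, mul_sub, mul_one, Pi.add_apply, Pi.sub_apply,
    Pi.mul_apply] at hplus hminus ⊢
  linarith

lemma interaction_add_mul_add_interaction_sub_mul [SFinite m]
    (hK : Integrable (fun p => ρ p.1 * ρ p.2 * K p.1 p.2) (m.prod m))
    (hw : AEStronglyMeasurable w m) (hw1 : ∀ x, |w x| ≤ 1) :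
    interaction m K (ρ + ρ * w) + interaction m K (ρ - ρ * w)
      = 2 * interaction m K ρ + 2 * interaction m K (ρ * w) := by
  have hfst := hK.mul_bdd (c := 1) hw.comp_fst (.of_forall fun p => hw1 p.1)
  have hsnd := hK.mul_bdd (c := 1) hw.comp_snd (.of_forall fun p => hw1 p.2)
  have hboth := hfst.mul_bdd (c := 1) hw.comp_snd (.of_forall fun p => hw1 p.2)
  refine interaction_add_add_interaction_sub hK (hsnd.congr ?_) (hfst.congr ?_) (hboth.congr ?_) <;>
  · refine .of_forall fun p => ?_
    simp only [Pi.mul_apply]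
    ring

end IsFiniteEntropyDensity

lemma mul_log_add_mul_log_le {s : ℝ} (hs : |s| ≤ 1 / 2) :
    (1 + s) * log (1 + s) + (1 - s) * log (1 - s) ≤ s ^ 2 + 4 * |s| ^ 3 := by
  have taylor {t : ℝ} (ht : |t| ≤ 1 / 2) : log (1 - t) ≤ -t - t ^ 2 / 2 + 2 * |t| ^ 3 := by
    have h := (abs_le.1 (abs_log_sub_add_sum_range_le (x := t) (by linarith) 2)).2
    norm_num [Finset.sum_range_succ] at h
    have hrem : |t| ^ 3 / (1 - |t|) ≤ 2 * |t| ^ 3 := by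
      rw [div_le_iff₀ (by linarith)]
      nlinarith [pow_nonneg (abs_nonneg t) 3]
    linarith
  have hpos := taylor (t := -s) (by rwa [abs_neg])
  rw [abs_neg, sub_neg_eq_add] at hpos
  obtain ⟨hl, hr⟩ := abs_le.1 hs
  have h1 := mul_le_mul_of_nonneg_left (taylor hs) (by linarith : 0 ≤ 1 - s)
  have h2 := mul_le_mul_of_nonneg_left hpos (by linarith : 0 ≤ 1 + s)
  linarith

/-- The free energy of the density `ρ` at inverse temperature `β` for the interaction `K`. -/
def freeEnergy (m : Measure Ω) (K : Ω → Ω → ℝ) (β : ℝ) (ρ : Ω → ℝ) : ℝ :=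
  entropy m ρ + β * interaction m K ρ

/-- Densities minimising the free energy up to an error `ε`. -/
structure IsAlmostMinimizer (m : Measure Ω) (K : Ω → Ω → ℝ) (β ε : ℝ) (ρ : Ω → ℝ) : Prop
    extends IsFiniteEntropyDensity m ρ where
  freeEnergy_le : ∀ g, IsFiniteEntropyDensity m g →
    freeEnergy m K β ρ ≤ freeEnergy m K β g + ε

lemma exists_isAlmostMinimizer [IsProbabilityMeasure m] {K : Ω → Ω → ℝ} {β B ε : ℝ} (hε : 0 < ε)
    (hB : ∀ g, IsFiniteEntropyDensity m g → B ≤ freeEnergy m K β g) :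
    ∃ ρ, IsAlmostMinimizer m K β ε ρ := by
  let S := freeEnergy m K β '' {g | IsFiniteEntropyDensity m g}
  have hbdd : BddBelow S := ⟨B, by rintro _ ⟨g, hg, rfl⟩; exact hB g hg⟩
  obtain ⟨_, ⟨ρ, hρ, rfl⟩, hlt⟩ := exists_lt_of_csInf_lt
    (s := S) ⟨_, _, IsFiniteEntropyDensity.one, rfl⟩ (lt_add_of_pos_right (sInf S) hε)
  exact ⟨ρ, hρ, fun g hg => hlt.le.trans
    (add_le_add_left (csInf_le hbdd (mem_image_of_mem _ hg)) ε)⟩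

namespace IsAlmostMinimizer

variable {ρ : Ω → ℝ} {K : Ω → Ω → ℝ} {β ε : ℝ}

lemma second_variation_nonneg [SFinite m] (hρ : IsAlmostMinimizer m K β ε ρ)
    (hK : Integrable (fun p => ρ p.1 * ρ p.2 * K p.1 p.2) (m.prod m)) {w : Ω → ℝ}
    (hw : AEStronglyMeasurable w m) (hw1 : ∀ x, |w x| ≤ 1 / 2) (hw0 : ∫ x, ρ x * w x ∂m = 0) :
    0 ≤ 2 * ε + ∫ x, ρ x * (w x ^ 2 + 4 * |w x| ^ 3) ∂m + 2 * β * interaction m K (ρ * w) := by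
  have hw1' (x : Ω) : |w x| ≤ 1 := (hw1 x).trans (by norm_num)
  have hadd := hρ.freeEnergy_le _ (hρ.add_mul hw hw1' hw0)
  have hsub := hρ.freeEnergy_le _ (hρ.sub_mul hw hw1' hw0)
  have hent := hρ.entropy_add_mul_add_entropy_sub_mul hw hw1'
  have hinter := IsFiniteEntropyDensity.interaction_add_mul_add_interaction_sub_mul hK hw hw1'
  have htaylor : ∫ x, ρ x * ((1 + w x) * log (1 + w x) + (1 - w x) * log (1 - w x)) ∂m
      ≤ ∫ x, ρ x * (w x ^ 2 + 4 * |w x| ^ 3) ∂m := by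
    refine integral_mono_ae (integrable_mul_comp_of_abs_le hρ.integrable hw hw1
        (φ := fun s => (1 + s) * log (1 + s) + (1 - s) * log (1 - s))
        ((continuous_mul_log.comp (by fun_prop)).add (continuous_mul_log.comp (by fun_prop))))
      (integrable_mul_comp_of_abs_le hρ.integrable hw hw1
        (φ := fun s => s ^ 2 + 4 * |s| ^ 3) (by fun_prop)) ?_
    filter_upwards [hρ.nonneg] with x hx
    exact mul_le_mul_of_nonneg_left (mul_log_add_mul_log_le (hw1 x)) hx
  unfold freeEnergy at hadd hsub
  linear_combination hadd + hsub + hent + β * hinter + htaylor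

end IsAlmostMinimizer

end Density

section SphericalVariation

variable {Ω : Type*} [MeasurableSpace Ω] {m : Measure Ω} {E : Type*} [NormedAddCommGroup E]
  [InnerProductSpace ℝ E] {σ : Ω → E} {ρ : Ω → ℝ}

lemma norm_barycenter_le_one (hσ1 : ∀ x, ‖σ x‖ ≤ 1) (h0 : 0 ≤ᵐ[m] ρ) (hρ : Integrable ρ m)
    (h1 : ∫ x, ρ x ∂m = 1) : ‖barycenter m σ ρ‖ ≤ 1 := by
  rw [← h1]
  refine norm_integral_le_of_norm_le hρ ?_
  filter_upwards [h0] with x hx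
  rw [norm_smul, norm_of_nonneg hx]
  exact mul_le_of_le_one_right hx (hσ1 x)

lemma integral_mul_inner_eq_inner_barycenter [CompleteSpace E] (hσ : AEStronglyMeasurable σ m)
    (hσ1 : ∀ x, ‖σ x‖ ≤ 1) (hρ : Integrable ρ m) (v : E) :
    ∫ x, ρ x * ⟪σ x, v⟫_ℝ ∂m = ⟪barycenter m σ ρ, v⟫_ℝ := by
  rw [barycenter, real_inner_comm, ← integral_inner (integrable_smul_of_norm_le_one hσ hσ1 hρ)]
  congr 1 with x
  rw [real_inner_smul_right, real_inner_comm]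

lemma integral_mul_inner_sub_barycenter [CompleteSpace E] (hσ : AEStronglyMeasurable σ m)
    (hσ1 : ∀ x, ‖σ x‖ ≤ 1) (hρ : Integrable ρ m) (h1 : ∫ x, ρ x ∂m = 1) (v : E) :
    ∫ x, ρ x * ⟪σ x - barycenter m σ ρ, v⟫_ℝ ∂m = 0 := by
  have hinner : Integrable (fun x => ρ x * ⟪σ x, v⟫_ℝ) m :=
    hρ.mul_bdd (c := ‖v‖) hσ.inner_const (.of_forall fun x =>
      (norm_inner_le_norm _ _).trans (mul_le_of_le_one_left (norm_nonneg v) (hσ1 x)))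
  simp only [inner_sub_left, mul_sub]
  rw [integral_sub hinner (hρ.mul_const _), integral_mul_const, h1, one_mul,
    integral_mul_inner_eq_inner_barycenter hσ hσ1 hρ, sub_self]

lemma integral_mul_norm_sub_barycenter_sq [CompleteSpace E] (hσ : AEStronglyMeasurable σ m)
    (hσ1 : ∀ x, ‖σ x‖ = 1) (hρ : Integrable ρ m) (h1 : ∫ x, ρ x ∂m = 1) :
    ∫ x, ρ x * ‖σ x - barycenter m σ ρ‖ ^ 2 ∂m = 1 - ‖barycenter m σ ρ‖ ^ 2 := by
  set a := barycenter m σ ρ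
  have hzero := integral_mul_inner_sub_barycenter hσ (fun x => (hσ1 x).le) hρ h1 a
  have hint : Integrable (fun x => ρ x * ⟪σ x - a, a⟫_ℝ) m := by
    refine hρ.mul_bdd (c := (1 + ‖a‖) * ‖a‖) (hσ.sub aestronglyMeasurable_const).inner_const
      (.of_forall fun x => (norm_inner_le_norm _ _).trans ?_)
    exact mul_le_mul_of_nonneg_right ((norm_sub_le _ _).trans_eq (by rw [hσ1])) (norm_nonneg a)
  have hexpand (x : Ω) : ρ x * ‖σ x - a‖ ^ 2
      = ρ x * (1 - ‖a‖ ^ 2) - 2 * (ρ x * ⟪σ x - a, a⟫_ℝ) := by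
    rw [norm_sub_sq_real, inner_sub_left, real_inner_self_eq_norm_sq, hσ1]
    ring
  simp only [hexpand]
  rw [integral_sub (hρ.mul_const _) (hint.const_mul 2), integral_mul_const, integral_const_mul, h1,
    hzero]
  ring

lemma integrable_sub_one_mul_sub_one_mul [SFinite m] {K : Ω → Ω → ℝ} (hsymm : ∀ x y, K x y = K y x)
    (hK : Integrable (fun p => K p.1 p.2) (m.prod m))
    (hρK : Integrable (fun p => ρ p.1 * K p.1 p.2) (m.prod m))
    (hρρK : Integrable (fun p => ρ p.1 * ρ p.2 * K p.1 p.2) (m.prod m)) :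
    Integrable (fun p => (ρ p.1 - 1) * (ρ p.2 - 1) * K p.1 p.2) (m.prod m) := by
  refine (((hρρK.sub hρK).sub hρK.swap).add hK).congr (.of_forall fun p => ?_)
  simp only [Pi.add_apply, Pi.sub_apply, Function.comp_apply, Prod.fst_swap, Prod.snd_swap,
    hsymm p.2 p.1]
  ring

lemma interaction_sub_one [IsProbabilityMeasure m] {K : Ω → Ω → ℝ} {c : ℝ}
    (hsymm : ∀ x y, K x y = K y x) (hpot : ∀ x, ∫ y, K x y ∂m = c)
    (hK : Integrable (fun p => K p.1 p.2) (m.prod m))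
    (hρK : Integrable (fun p => ρ p.1 * K p.1 p.2) (m.prod m))
    (hρρK : Integrable (fun p => ρ p.1 * ρ p.2 * K p.1 p.2) (m.prod m))
    (h1 : ∫ x, ρ x ∂m = 1) :
    interaction m K (fun x => ρ x - 1) = interaction m K ρ - c := by
  have hcK : ∫ p, K p.1 p.2 ∂m.prod m = c := by
    rw [integral_prod _ hK]
    simp [hpot]
  have hcρK : ∫ p, ρ p.1 * K p.1 p.2 ∂m.prod m = c := by
    rw [integral_prod _ hρK]
    simp only [integral_const_mul, hpot, integral_mul_const, h1, one_mul]
  have hswap : ∫ p, ρ p.2 * K p.2 p.1 ∂m.prod m = c :=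
    (integral_prod_swap fun p : Ω × Ω => ρ p.1 * K p.1 p.2).trans hcρK
  have hexpand (p : Ω × Ω) : (ρ p.1 - 1) * (ρ p.2 - 1) * K p.1 p.2
      = ρ p.1 * ρ p.2 * K p.1 p.2 - ρ p.1 * K p.1 p.2 - ρ p.2 * K p.2 p.1 + K p.1 p.2 := by
    rw [hsymm p.2 p.1]
    ring
  simp only [interaction, hexpand]
  have hswapK : Integrable (fun p => ρ p.2 * K p.2 p.1) (m.prod m) := hρK.swap
  have hsub : Integrable (fun p => ρ p.1 * ρ p.2 * K p.1 p.2 - ρ p.1 * K p.1 p.2) (m.prod m) :=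
    hρρK.sub hρK
  have hsub' : Integrable (fun p => ρ p.1 * ρ p.2 * K p.1 p.2 - ρ p.1 * K p.1 p.2
      - ρ p.2 * K p.2 p.1) (m.prod m) := hsub.sub hswapK
  rw [integral_add hsub' hK, integral_sub hsub hswapK, integral_sub hρρK hρK, hcK, hcρK, hswap]
  ring

lemma abs_inner_le_norm_of_norm_eq_one {v : E} (hv : ‖v‖ = 1) (x : E) : |⟪x, v⟫_ℝ| ≤ ‖x‖ := by
  simpa [hv] using abs_real_inner_le_norm x v

lemma sum_integral_mul_inner_sq [FiniteDimensional ℝ E] {τ : Ω → E} (hτ : AEStronglyMeasurable τ m)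
    {C : ℝ} (hτC : ∀ x, ‖τ x‖ ≤ C) (hρ : Integrable ρ m) {ι : Type*} [Fintype ι]
    (e : OrthonormalBasis ι ℝ E) :
    ∑ i, ∫ x, ρ x * ⟪τ x, e i⟫_ℝ ^ 2 ∂m = ∫ x, ρ x * ‖τ x‖ ^ 2 ∂m := by
  have hint (i : ι) : Integrable (fun x => ρ x * ⟪τ x, e i⟫_ℝ ^ 2) m :=
    integrable_mul_comp_of_abs_le (C := C) (φ := fun s => s ^ 2) hρ hτ.inner_const
      (fun x => (abs_inner_le_norm_of_norm_eq_one (e.norm_eq_one i) _).trans (hτC x)) (by fun_prop)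
  rw [← integral_finsetSum _ fun i _ => hint i]
  congr 1 with x
  rw [← e.sum_sq_inner_left, Finset.mul_sum]

lemma sum_interaction_mul_inner [SFinite m] {τ : Ω → E} (hτ : AEStronglyMeasurable τ m)
    {C : ℝ} (hτC : ∀ x, ‖τ x‖ ≤ C) {K : Ω → Ω → ℝ}
    (hK : Integrable (fun p => ρ p.1 * ρ p.2 * K p.1 p.2) (m.prod m)) {ι : Type*} [Fintype ι]
    (e : OrthonormalBasis ι ℝ E) :
    ∑ i, interaction m K (fun x => ρ x * ⟪τ x, e i⟫_ℝ)
      = interaction m (fun x y => ⟪τ x, τ y⟫_ℝ * K x y) ρ := by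
  have hle (i : ι) (x : Ω) : ‖⟪τ x, e i⟫_ℝ‖ ≤ C :=
    (abs_inner_le_norm_of_norm_eq_one (e.norm_eq_one i) _).trans (hτC x)
  have hint (i : ι) : Integrable (fun p : Ω × Ω =>
      ρ p.1 * ⟪τ p.1, e i⟫_ℝ * (ρ p.2 * ⟪τ p.2, e i⟫_ℝ) * K p.1 p.2) (m.prod m) := by
    refine ((hK.mul_bdd (c := C) hτ.comp_fst.inner_const (.of_forall fun p => hle i p.1)).mul_bdd
      (c := C) hτ.comp_snd.inner_const (.of_forall fun p => hle i p.2)).congr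
      (.of_forall fun p => ?_)
    ring
  simp only [interaction]
  rw [← integral_finsetSum _ fun i _ => hint i]
  congr 1 with p
  rw [← e.sum_inner_mul_inner, Finset.sum_mul, Finset.mul_sum]
  refine Finset.sum_congr rfl fun i _ => ?_
  rw [real_inner_comm (τ p.2)]
  ring

lemma integrable_interaction_inner_mul [SFinite m] {τ : Ω → E} (hτ : AEStronglyMeasurable τ m)
    {C : ℝ} (hτC : ∀ x, ‖τ x‖ ≤ C) {K : Ω → Ω → ℝ}
    (hK : Integrable (fun p => ρ p.1 * ρ p.2 * K p.1 p.2) (m.prod m)) :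
    Integrable (fun p => ρ p.1 * ρ p.2 * (⟪τ p.1, τ p.2⟫_ℝ * K p.1 p.2)) (m.prod m) := by
  refine (hK.mul_bdd (c := C * C) (aestronglyMeasurable_inner_prod hτ) (.of_forall fun p =>
    (norm_inner_le_norm _ _).trans (mul_le_mul (hτC _) (hτC _) (norm_nonneg _)
      ((norm_nonneg _).trans (hτC p.1))))).congr (.of_forall fun p => ?_)
  ring

lemma interaction_inner_sub_mul_le [SFinite m] (hσ : AEStronglyMeasurable σ m)
    (hσ1 : ∀ x, ‖σ x‖ ≤ 1) {K : Ω → Ω → ℝ} (hK0 : ∀ x y, K x y ≤ 0) (h0 : 0 ≤ᵐ[m] ρ)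
    (hK : Integrable (fun p => ρ p.1 * ρ p.2 * K p.1 p.2) (m.prod m)) (a : E) :
    interaction m (fun x y => ⟪σ x - a, σ y - a⟫_ℝ * K x y) ρ
      ≤ interaction m (fun x y => ⟪σ x, σ y⟫_ℝ * K x y) ρ - 2 * ‖a‖ * interaction m K ρ := by
  have hσσ := integrable_interaction_inner_mul hσ hσ1 hK
  simp only [interaction]
  rw [← integral_const_mul, ← integral_sub hσσ (hK.const_mul _)]
  refine integral_mono_ae (integrable_interaction_inner_mul (hσ.sub aestronglyMeasurable_const)
    (C := 1 + ‖a‖) (fun x => (norm_sub_le _ _).trans (by gcongr; exact hσ1 x)) hK)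
    (hσσ.sub (hK.const_mul _)) ?_
  filter_upwards [Measure.quasiMeasurePreserving_fst.ae h0,
    Measure.quasiMeasurePreserving_snd.ae h0] with p hp1 hp2
  have hx := (abs_le.1 (abs_real_inner_le_norm (σ p.1) a)).2
  have hy := (abs_le.1 (abs_real_inner_le_norm a (σ p.2))).2
  have hinner : ⟪σ p.1, σ p.2⟫_ℝ - 2 * ‖a‖ ≤ ⟪σ p.1 - a, σ p.2 - a⟫_ℝ := by
    simp only [inner_sub_left, inner_sub_right, real_inner_self_eq_norm_sq]
    nlinarith [norm_nonneg a, hσ1 p.1, hσ1 p.2]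
  calc ρ p.1 * ρ p.2 * (⟪σ p.1 - a, σ p.2 - a⟫_ℝ * K p.1 p.2)
      ≤ ρ p.1 * ρ p.2 * ((⟪σ p.1, σ p.2⟫_ℝ - 2 * ‖a‖) * K p.1 p.2) :=
        mul_le_mul_of_nonneg_left (mul_le_mul_of_nonpos_right hinner (hK0 _ _))
          (mul_nonneg hp1 hp2)
    _ = _ := by ring

lemma interaction_const_mul {K : Ω → Ω → ℝ} (u : ℝ) (h : Ω → ℝ) :
    interaction m K (fun x => u * h x) = u ^ 2 * interaction m K h := by
  simp only [interaction]
  rw [← integral_const_mul]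
  congr 1 with p
  ring

lemma IsFiniteEntropyDensity.norm_sub_barycenter_le_two (hρ : IsFiniteEntropyDensity m ρ)
    (hσ1 : ∀ x, ‖σ x‖ ≤ 1) (x : Ω) : ‖σ x - barycenter m σ ρ‖ ≤ 2 :=
  (norm_sub_le _ _).trans (by
    linarith [hσ1 x, norm_barycenter_le_one hσ1 hρ.nonneg hρ.integrable hρ.integral_eq_one])

namespace IsAlmostMinimizer

variable [SFinite m] {K : Ω → Ω → ℝ} {β ε u : ℝ}

lemma second_variation_inner_nonneg [CompleteSpace E] (hρ : IsAlmostMinimizer m K β ε ρ)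
    (hK : Integrable (fun p => ρ p.1 * ρ p.2 * K p.1 p.2) (m.prod m))
    (hσ : AEStronglyMeasurable σ m) (hσ1 : ∀ x, ‖σ x‖ ≤ 1) (hu : 0 ≤ u) (hu4 : u ≤ 1 / 4)
    {v : E} (hv : ‖v‖ = 1) :
    0 ≤ 2 * ε + u ^ 2 * (1 + 8 * u) * ∫ x, ρ x * ⟪σ x - barycenter m σ ρ, v⟫_ℝ ^ 2 ∂m
      + 2 * β * u ^ 2 * interaction m K fun x => ρ x * ⟪σ x - barycenter m σ ρ, v⟫_ℝ := by
  let c (x : Ω) : ℝ := ⟪σ x - barycenter m σ ρ, v⟫_ℝ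
  have hc : AEStronglyMeasurable c m := (hσ.sub aestronglyMeasurable_const).inner_const
  have hc2 (x : Ω) : |c x| ≤ 2 :=
    (abs_inner_le_norm_of_norm_eq_one hv _).trans (hρ.norm_sub_barycenter_le_two hσ1 x)
  have hw2 (x : Ω) : |u * c x| ≤ 2 * u := by
    rw [abs_mul, abs_of_nonneg hu, mul_comm]
    exact mul_le_mul_of_nonneg_right (hc2 x) hu
  have hmean : ∫ x, ρ x * (u * c x) ∂m = 0 := by
    simp only [mul_left_comm _ u]
    rw [integral_const_mul, integral_mul_inner_sub_barycenter hσ hσ1 hρ.integrable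
      hρ.integral_eq_one, mul_zero]
  have hcubic : ∫ x, ρ x * ((u * c x) ^ 2 + 4 * |u * c x| ^ 3) ∂m
      ≤ u ^ 2 * (1 + 8 * u) * ∫ x, ρ x * c x ^ 2 ∂m := by
    rw [← integral_const_mul]
    refine integral_mono_ae
      (integrable_mul_comp_of_abs_le (φ := fun s => s ^ 2 + 4 * |s| ^ 3) hρ.integrable
        (hc.const_mul u) hw2 (by fun_prop))
      ((integrable_mul_comp_of_abs_le (φ := fun s => s ^ 2) hρ.integrable hc hc2
        (by fun_prop)).const_mul _) ?_
    filter_upwards [hρ.nonneg] with x hx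
    have hcube : |u * c x| ^ 3 ≤ 2 * u * (u * c x) ^ 2 := by
      rw [pow_succ', sq_abs]
      exact mul_le_mul_of_nonneg_right (hw2 x) (sq_nonneg _)
    calc ρ x * ((u * c x) ^ 2 + 4 * |u * c x| ^ 3) ≤ ρ x * ((1 + 8 * u) * (u * c x) ^ 2) :=
          mul_le_mul_of_nonneg_left (by linarith) hx
      _ = u ^ 2 * (1 + 8 * u) * (ρ x * c x ^ 2) := by ring
  have hscale : (ρ * fun x => u * c x) = fun x => u * (ρ x * c x) :=
    funext fun x => mul_left_comm _ _ _
  have hvar := hρ.second_variation_nonneg hK (hc.const_mul u)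
    (fun x => (hw2 x).trans (by linarith)) hmean
  rw [hscale, interaction_const_mul] at hvar
  linarith

lemma sum_second_variation_nonneg [FiniteDimensional ℝ E] (hρ : IsAlmostMinimizer m K β ε ρ)
    (hK : Integrable (fun p => ρ p.1 * ρ p.2 * K p.1 p.2) (m.prod m))
    (hσ : AEStronglyMeasurable σ m) (hσ1 : ∀ x, ‖σ x‖ = 1) (hu : 0 ≤ u) (hu4 : u ≤ 1 / 4) :
    0 ≤ 2 * Module.finrank ℝ E * ε + u ^ 2 * (1 + 8 * u) + 2 * β * u ^ 2 * interaction m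
      (fun x y => ⟪σ x - barycenter m σ ρ, σ y - barycenter m σ ρ⟫_ℝ * K x y) ρ := by
  have hσ1' (x : Ω) : ‖σ x‖ ≤ 1 := (hσ1 x).le
  have hτ : AEStronglyMeasurable (fun x => σ x - barycenter m σ ρ) m :=
    hσ.sub aestronglyMeasurable_const
  have hτ2 := hρ.norm_sub_barycenter_le_two hσ1'
  let e := stdOrthonormalBasis ℝ E
  have hsum := Finset.sum_nonneg fun i (_ : i ∈ Finset.univ) =>
    hρ.second_variation_inner_nonneg hK hσ hσ1' hu hu4 (e.norm_eq_one i)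
  rw [Finset.sum_add_distrib, Finset.sum_add_distrib, Finset.sum_const, Finset.card_univ,
    Fintype.card_fin, nsmul_eq_mul, ← Finset.mul_sum, ← Finset.mul_sum,
    sum_integral_mul_inner_sq hτ hτ2 hρ.integrable, sum_interaction_mul_inner hτ hτ2 hK,
    integral_mul_norm_sub_barycenter_sq hσ hσ1 hρ.integrable hρ.integral_eq_one] at hsum
  have : 0 ≤ u ^ 2 * (1 + 8 * u) * ‖barycenter m σ ρ‖ ^ 2 := by positivity
  linarith

end IsAlmostMinimizer

end SphericalVariation

section Stereographic

variable {F : Type*} [NormedAddCommGroup F]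

/-- A quarter of the squared distance between the images of `x` and `y` under inverse
stereographic projection to the unit sphere, so that it takes its values in `[0, 1]`. -/
def chordSq (x y : F) : ℝ := ‖x - y‖ ^ 2 / ((1 + ‖x‖ ^ 2) * (1 + ‖y‖ ^ 2))

lemma one_add_norm_sq_pos (x : F) : 0 < 1 + ‖x‖ ^ 2 := by positivity

lemma chordSq_comm (x y : F) : chordSq x y = chordSq y x := by
  rw [chordSq, chordSq, norm_sub_rev, mul_comm]

lemma chordSq_nonneg (x y : F) : 0 ≤ chordSq x y := by
  unfold chordSq
  positivity

@[fun_prop]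
lemma continuous_chordSq : Continuous fun p : F × F => chordSq p.1 p.2 := by
  have h (x : F) : 1 + ‖x‖ ^ 2 ≠ 0 := (one_add_norm_sq_pos x).ne'
  unfold chordSq
  fun_prop (disch := intro p; exact mul_ne_zero (h _) (h _))

lemma log_chordSq {x y : F} (h : x ≠ y) :
    log (chordSq x y) = 2 * log ‖x - y‖ - log (1 + ‖x‖ ^ 2) - log (1 + ‖y‖ ^ 2) := by
  have h0 : ‖x - y‖ ≠ 0 := norm_ne_zero_iff.2 (sub_ne_zero.2 h)
  have hx := one_add_norm_sq_pos x
  have hy := one_add_norm_sq_pos y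
  rw [chordSq, log_div (by positivity) (by positivity), log_mul hx.ne' hy.ne', log_pow]
  push_cast
  ring

variable [InnerProductSpace ℝ F]

/-- Inverse stereographic projection from the north pole `(0, 1)`, onto the unit sphere of
`F × ℝ`. -/
def invStereographic (x : F) : WithLp 2 (F × ℝ) :=
  WithLp.toLp 2 ((1 + ‖x‖ ^ 2)⁻¹ • ((2 : ℝ) • x, ‖x‖ ^ 2 - 1))

lemma invStereographic_fst (x : F) :
    (invStereographic x).fst = (1 + ‖x‖ ^ 2)⁻¹ • (2 : ℝ) • x := rfl

lemma invStereographic_snd (x : F) :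
    (invStereographic x).snd = (1 + ‖x‖ ^ 2)⁻¹ * (‖x‖ ^ 2 - 1) := rfl

lemma inner_invStereographic_left (x : F) (v : WithLp 2 (F × ℝ)) :
    ⟪invStereographic x, v⟫_ℝ
      = (1 + ‖x‖ ^ 2)⁻¹ * (2 * ⟪x, v.fst⟫_ℝ + (‖x‖ ^ 2 - 1) * v.snd) := by
  simp only [WithLp.prod_inner_apply, WithLp.ofLp_fst, WithLp.ofLp_snd, invStereographic_fst,
    invStereographic_snd, real_inner_smul_left, RCLike.inner_apply, conj_trivial]
  ring

lemma inner_invStereographic (x y : F) :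
    ⟪invStereographic x, invStereographic y⟫_ℝ = 1 - 2 * chordSq x y := by
  have := one_add_norm_sq_pos x
  have := one_add_norm_sq_pos y
  rw [inner_invStereographic_left, chordSq, norm_sub_sq_real]
  rw [invStereographic_fst, invStereographic_snd, real_inner_smul_right, real_inner_smul_right]
  field_simp
  ring

lemma norm_invStereographic (x : F) : ‖invStereographic x‖ = 1 := by
  rw [norm_eq_sqrt_real_inner, inner_invStereographic]
  simp [chordSq]

lemma chordSq_le_one (x y : F) : chordSq x y ≤ 1 := by
  have h := neg_le_of_abs_le (abs_real_inner_le_norm (invStereographic x) (invStereographic y))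
  rw [inner_invStereographic, norm_invStereographic, norm_invStereographic] at h
  linarith

lemma continuous_invStereographic : Continuous (invStereographic : F → WithLp 2 (F × ℝ)) := by
  have h (x : F) : 1 + ‖x‖ ^ 2 ≠ 0 := (one_add_norm_sq_pos x).ne'
  unfold invStereographic
  fun_prop (disch := exact h)

end Stereographic

section SphereMeasure

open scoped ENNReal ComplexConjugate

lemma map_withDensity_comp {X Y : Type*} [MeasurableSpace X] [MeasurableSpace Y]
    {μ : Measure X} {f : X → Y} {g : Y → ℝ≥0∞} (hf : Measurable f) (hg : Measurable g) :
    (μ.withDensity (g ∘ f)).map f = (μ.map f).withDensity g := by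
  ext s hs
  rw [Measure.map_apply hf hs, withDensity_apply _ (hf hs), withDensity_apply _ hs,
    setLIntegral_map hs hg hf]
  rfl

section Definition

variable {F : Type*} [NormedAddCommGroup F]

/-- The density of the normalised area of the sphere in stereographic coordinates on a plane. -/
def sphereDensity (x : F) : ℝ := 1 / (π * (1 + ‖x‖ ^ 2) ^ 2)

lemma sphereDensity_pos (x : F) : 0 < sphereDensity x := by
  unfold sphereDensity
  positivity

@[fun_prop]
lemma continuous_sphereDensity : Continuous (sphereDensity : F → ℝ) := by
  unfold sphereDensity
  fun_prop (disch := intro x; positivity)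

variable (F) in
/-- The normalised area of the sphere in stereographic coordinates on the plane `F`. -/
def sphereMeasure [MeasureSpace F] : Measure F :=
  volume.withDensity fun x => ENNReal.ofReal (sphereDensity x)

instance [MeasureSpace F] [SFinite (volume : Measure F)] : SFinite (sphereMeasure F) := by
  unfold sphereMeasure
  infer_instance

end Definition

lemma measurePreserving_sphereMeasure_of_isometry {F G : Type*}
    [NormedAddCommGroup F] [InnerProductSpace ℝ F] [FiniteDimensional ℝ F] [MeasurableSpace F]
    [BorelSpace F] [NormedAddCommGroup G] [InnerProductSpace ℝ G] [FiniteDimensional ℝ G]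
    [MeasurableSpace G] [BorelSpace G] (e : F ≃ₗᵢ[ℝ] G) :
    MeasurePreserving e (sphereMeasure F) (sphereMeasure G) := by
  refine ⟨e.continuous.measurable, ?_⟩
  have hcomp : (fun x : F => ENNReal.ofReal (sphereDensity x))
      = (fun y : G => ENNReal.ofReal (sphereDensity y)) ∘ e := by
    ext x
    simp [sphereDensity]
  rw [sphereMeasure, hcomp, map_withDensity_comp e.continuous.measurable (by fun_prop),
    e.measurePreserving.map_eq, sphereMeasure]

lemma lintegral_comp_norm_complex {g : ℝ → ℝ≥0∞} (hg : Measurable g) :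
    ∫⁻ w : ℂ, g ‖w‖ = ∫⁻ r in Ioi (0 : ℝ), ENNReal.ofReal (2 * π * r) * g r := by
  have hpolar : Measurable fun r => ENNReal.ofReal r * g r := by fun_prop
  rw [← Complex.lintegral_comp_polarCoord_symm]
  calc ∫⁻ p in polarCoord.target, ENNReal.ofReal p.1 • g ‖Complex.polarCoord.symm p‖
      = ∫⁻ p in polarCoord.target, ENNReal.ofReal p.1 * g p.1 * 1 := by
        refine setLIntegral_congr_fun polarCoord.open_target.measurableSet fun p hp => ?_
        simp only [smul_eq_mul, mul_one, Complex.norm_polarCoord_symm,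
          abs_of_pos (show 0 < p.1 from hp.1)]
    _ = (∫⁻ r in Ioi (0 : ℝ), ENNReal.ofReal r * g r) * ENNReal.ofReal (2 * π) := by
        rw [polarCoord_target, Measure.volume_eq_prod, ← Measure.prod_restrict,
          lintegral_prod_mul hpolar.aemeasurable aemeasurable_const, lintegral_one,
          Measure.restrict_apply_univ, Real.volume_Ioo]
        congr 2
        ring
    _ = ∫⁻ r in Ioi (0 : ℝ), ENNReal.ofReal (2 * π * r) * g r := by
        rw [mul_comm, ← lintegral_const_mul _ hpolar]
        simp only [ENNReal.ofReal_mul two_pi_pos.le, mul_assoc _ (ENNReal.ofReal _) (g _)]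

lemma bijOn_sq_div_one_add_sq : BijOn (fun r : ℝ => r ^ 2 / (1 + r ^ 2)) (Ioi 0) (Ioo 0 1) := by
  refine ⟨fun r (hr : 0 < r) => ⟨by positivity, ?_⟩, fun a (ha : 0 < a) b (hb : 0 < b) hab => ?_,
    fun s ⟨h0, h1⟩ => ?_⟩
  · rw [div_lt_one (by positivity)]
    linarith
  · rw [div_eq_div_iff (by positivity) (by positivity)] at hab
    exact (pow_left_inj₀ ha.le hb.le two_ne_zero).1 (by linarith)
  · have h1' : 0 < 1 - s := sub_pos.2 h1
    refine ⟨√(s / (1 - s)), Real.sqrt_pos.2 (by positivity), ?_⟩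
    simp only [Real.sq_sqrt (div_pos h0 h1').le]
    field_simp
    ring

lemma hasDerivAt_sq_div_one_add_sq (r : ℝ) :
    HasDerivAt (fun r : ℝ => r ^ 2 / (1 + r ^ 2)) (2 * r / (1 + r ^ 2) ^ 2) r := by
  have h1 : 1 + r ^ 2 ≠ 0 := by positivity
  refine ((hasDerivAt_pow 2 r).div ((hasDerivAt_pow 2 r).const_add 1) h1).congr_deriv ?_
  field_simp
  push_cast
  ring

lemma map_chordSq_zero_sphereMeasure :
    (sphereMeasure ℂ).map (chordSq 0) = volume.restrict (Ioo 0 1) := by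
  have hchord (w : ℂ) : chordSq 0 w = ‖w‖ ^ 2 / (1 + ‖w‖ ^ 2) := by simp [chordSq]
  refine Measure.ext_of_lintegral _ fun G hG => ?_
  rw [lintegral_map hG (by fun_prop), sphereMeasure,
    lintegral_withDensity_eq_lintegral_mul (g := fun w => G (chordSq 0 w)) _ (by fun_prop)
      (by fun_prop),
    ← bijOn_sq_div_one_add_sq.image_eq, lintegral_image_eq_lintegral_abs_deriv_mul
      measurableSet_Ioi (fun r _ => (hasDerivAt_sq_div_one_add_sq r).hasDerivWithinAt)
      bijOn_sq_div_one_add_sq.injOn]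
  simp only [Pi.mul_apply, hchord, sphereDensity]
  rw [lintegral_comp_norm_complex (g := fun r =>
    ENNReal.ofReal (1 / (π * (1 + r ^ 2) ^ 2)) * G (r ^ 2 / (1 + r ^ 2))) (by fun_prop)]
  refine setLIntegral_congr_fun measurableSet_Ioi fun r (hr : 0 < r) => ?_
  rw [← mul_assoc, ← ENNReal.ofReal_mul (by positivity), abs_of_nonneg (by positivity)]
  congr 2
  field_simp

/-- The rotation of the Riemann sphere taking `a` to `0`, as a Möbius transformation. The junk
value of the division affects only the point that is sent to infinity. -/
def sphereRotation (a z : ℂ) : ℂ := (z - a) / (1 + conj a * z)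

lemma norm_one_add_conj_mul_sq (a z : ℂ) :
    ‖1 + conj a * z‖ ^ 2 + ‖z - a‖ ^ 2 = (1 + ‖a‖ ^ 2) * (1 + ‖z‖ ^ 2) := by
  simp only [← Complex.normSq_eq_norm_sq, Complex.normSq_apply]
  simp
  ring

lemma norm_one_add_conj_mul_self (a : ℂ) : ‖1 + conj a * a‖ = 1 + ‖a‖ ^ 2 := by
  rw [Complex.conj_mul']
  exact_mod_cast Complex.norm_of_nonneg (one_add_norm_sq_pos a).le

lemma one_add_conj_mul_self_ne_zero (a : ℂ) : 1 + conj a * a ≠ 0 := by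
  rw [← norm_ne_zero_iff, norm_one_add_conj_mul_self]
  exact (one_add_norm_sq_pos a).ne'

lemma ae_one_add_mul_ne_zero (a : ℂ) : ∀ᵐ z : ℂ, 1 + a * z ≠ 0 := by
  filter_upwards [Measure.ae_ne volume (-1 / a)] with z hz h
  have ha : a ≠ 0 := by
    rintro rfl
    simp at h
  refine hz ?_
  field_simp
  linear_combination h

section

variable {a z : ℂ}

lemma one_add_conj_neg_mul_sphereRotation (hz : 1 + conj a * z ≠ 0) :
    1 + conj (-a) * sphereRotation a z = (1 + conj a * a) / (1 + conj a * z) := by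
  rw [sphereRotation, map_neg]
  field_simp
  ring

lemma sphereRotation_neg_sphereRotation (hz : 1 + conj a * z ≠ 0) :
    sphereRotation (-a) (sphereRotation a z) = z := by
  have ha := one_add_conj_mul_self_ne_zero a
  rw [sphereRotation, one_add_conj_neg_mul_sphereRotation hz, sphereRotation, sub_neg_eq_add,
    div_eq_iff (div_ne_zero ha hz), div_add' _ _ _ hz, mul_div_assoc']
  congr 1
  ring

lemma one_add_norm_sphereRotation_sq (hz : 1 + conj a * z ≠ 0) :
    1 + ‖sphereRotation a z‖ ^ 2 = (1 + ‖a‖ ^ 2) * (1 + ‖z‖ ^ 2) / ‖1 + conj a * z‖ ^ 2 := by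
  have := norm_pos_iff.2 hz
  rw [sphereRotation, norm_div, div_pow, ← norm_one_add_conj_mul_sq, add_div,
    div_self (by positivity)]

lemma chordSq_zero_sphereRotation (hz : 1 + conj a * z ≠ 0) :
    chordSq 0 (sphereRotation a z) = chordSq a z := by
  have := norm_pos_iff.2 hz
  rw [chordSq, chordSq, one_add_norm_sphereRotation_sq hz, zero_sub, norm_neg, sphereRotation,
    norm_div, norm_zero, norm_sub_rev a z]
  generalize ‖1 + conj a * z‖ = N at this
  field_simp
  simp

lemma hasDerivAt_sphereRotation (hz : 1 + conj a * z ≠ 0) :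
    HasDerivAt (sphereRotation a) ((1 + conj a * a) / (1 + conj a * z) ^ 2) z := by
  refine (((hasDerivAt_id z).sub_const a).div
    (((hasDerivAt_id z).const_mul (conj a)).const_add 1) hz).congr_deriv ?_
  simp only [id]
  ring

lemma sphereDensity_sphereRotation (hz : 1 + conj a * z ≠ 0) :
    ‖(1 + conj a * a) / (1 + conj a * z) ^ 2‖ ^ 2 * sphereDensity (sphereRotation a z)
      = sphereDensity z := by
  have := norm_pos_iff.2 hz
  rw [sphereDensity, one_add_norm_sphereRotation_sq hz, norm_div, norm_one_add_conj_mul_self,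
    norm_pow, sphereDensity]
  field_simp

end

lemma bijOn_sphereRotation (a : ℂ) :
    BijOn (sphereRotation a) {z | 1 + conj a * z ≠ 0} {w | 1 + conj (-a) * w ≠ 0} := by
  have hmaps (a : ℂ) :
      MapsTo (sphereRotation a) {z | 1 + conj a * z ≠ 0} {w | 1 + conj (-a) * w ≠ 0} :=
    fun z hz => by
      rw [mem_ofPred_eq, one_add_conj_neg_mul_sphereRotation hz]
      exact div_ne_zero (one_add_conj_mul_self_ne_zero a) hz
  refine InvOn.bijOn (f' := sphereRotation (-a)) ⟨fun z => sphereRotation_neg_sphereRotation,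
    fun w hw => ?_⟩ (hmaps a) (by simpa using hmaps (-a))
  simpa using sphereRotation_neg_sphereRotation hw

lemma det_restrictScalars_toSpanSingleton (d : ℂ) :
    ((ContinuousLinearMap.toSpanSingleton ℂ d).restrictScalars ℝ).det = ‖d‖ ^ 2 := by
  rw [ContinuousLinearMap.det, ContinuousLinearMap.coe_restrictScalars,
    LinearMap.det_restrictScalars]
  simp [Algebra.norm_complex_apply, Complex.normSq_eq_norm_sq]

lemma measurePreserving_sphereRotation (a : ℂ) :
    MeasurePreserving (sphereRotation a) (sphereMeasure ℂ) (sphereMeasure ℂ) := by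
  have hmeas : Measurable (sphereRotation a) := by
    unfold sphereRotation
    fun_prop
  have huniv (a : ℂ) : {z : ℂ | 1 + conj a * z ≠ 0} =ᵐ[volume] (univ : Set ℂ) :=
    eventuallyEq_univ.2 (ae_one_add_mul_ne_zero _)
  have hopen : IsOpen {z : ℂ | 1 + conj a * z ≠ 0} :=
    isOpen_ne_fun (by fun_prop) continuous_const
  refine ⟨hmeas, Measure.ext_of_lintegral _ fun G hG => ?_⟩
  rw [lintegral_map hG hmeas, sphereMeasure,
    lintegral_withDensity_eq_lintegral_mul (g := fun w => G (sphereRotation a w)) _ (by fun_prop)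
      (by fun_prop), lintegral_withDensity_eq_lintegral_mul _ (by fun_prop) hG,
    ← setLIntegral_univ (μ := volume), ← setLIntegral_univ (μ := volume),
    ← setLIntegral_congr (huniv a), ← setLIntegral_congr (huniv (-a)),
    ← (bijOn_sphereRotation a).image_eq, lintegral_image_eq_lintegral_abs_det_fderiv_mul volume
      hopen.measurableSet (fun z hz =>
        ((hasDerivAt_sphereRotation hz).hasFDerivAt.restrictScalars ℝ).hasFDerivWithinAt)
      (bijOn_sphereRotation a).injOn]
  refine setLIntegral_congr_fun hopen.measurableSet fun z hz => ?_
  simp only [Pi.mul_apply, det_restrictScalars_toSpanSingleton]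
  rw [← mul_assoc, ← ENNReal.ofReal_mul (abs_nonneg _), abs_of_nonneg (sq_nonneg _),
    sphereDensity_sphereRotation hz]

lemma map_chordSq_sphereMeasure_complex (a : ℂ) :
    (sphereMeasure ℂ).map (chordSq a) = volume.restrict (Ioo 0 1) := by
  rw [← map_chordSq_zero_sphereMeasure]
  conv_rhs => rw [← (measurePreserving_sphereRotation a).map_eq]
  rw [Measure.map_map (by fun_prop) (measurePreserving_sphereRotation a).measurable]
  refine Measure.map_congr (withDensity_absolutelyContinuous _ _ ?_)
  filter_upwards [ae_one_add_mul_ne_zero (conj a)] with z hz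
  exact (chordSq_zero_sphereRotation hz).symm

section Plane

variable {F : Type*} [NormedAddCommGroup F] [InnerProductSpace ℝ F] [FiniteDimensional ℝ F]
  [MeasurableSpace F] [BorelSpace F] [Fact (Module.finrank ℝ F = 2)]

lemma map_chordSq_sphereMeasure (x : F) :
    (sphereMeasure F).map (chordSq x) = volume.restrict (Ioo 0 1) := by
  let e : ℂ ≃ₗᵢ[ℝ] F := Complex.orthonormalBasisOneI.equiv
    ((stdOrthonormalBasis ℝ F).reindex (finCongr Fact.out)) (Equiv.refl _)
  have hchord : chordSq x ∘ e = chordSq (e.symm x) := by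
    ext z
    rw [Function.comp_apply, chordSq, chordSq, e.norm_map, e.symm.norm_map,
      ← e.norm_map (e.symm x - z), map_sub, e.apply_symm_apply]
  rw [← map_chordSq_sphereMeasure_complex (e.symm x), ← hchord,
    ← Measure.map_map (by fun_prop) (by fun_prop),
    (measurePreserving_sphereMeasure_of_isometry e).map_eq]

lemma measurePreserving_chordSq (x : F) :
    MeasurePreserving (chordSq x) (sphereMeasure F) (volume.restrict (Ioo 0 1)) :=
  ⟨by fun_prop, map_chordSq_sphereMeasure x⟩

lemma measurePreserving_prodMk_chordSq :
    MeasurePreserving (fun p : F × F => (p.1, chordSq p.1 p.2))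
      ((sphereMeasure F).prod (sphereMeasure F))
      ((sphereMeasure F).prod (volume.restrict (Ioo 0 1))) :=
  (MeasurePreserving.id _).skew_product continuous_chordSq.measurable
    (.of_forall map_chordSq_sphereMeasure)

instance : IsProbabilityMeasure (sphereMeasure F) := by
  refine ⟨?_⟩
  simpa using (measurePreserving_chordSq (0 : F)).measure_preimage nullMeasurableSet_univ

variable {G : ℝ → ℝ}

lemma integrable_comp_chordSq (x : F) (hG : IntegrableOn G (Ioo 0 1)) :
    Integrable (fun y => G (chordSq x y)) (sphereMeasure F) :=
  (measurePreserving_chordSq x).integrable_comp_of_integrable hG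

lemma integral_comp_chordSq (x : F) (hG : IntegrableOn G (Ioo 0 1)) :
    ∫ y, G (chordSq x y) ∂sphereMeasure F = ∫ r in Ioo 0 1, G r := by
  have hx := measurePreserving_chordSq x
  rw [← hx.map_eq, integral_map hx.measurable.aemeasurable (hx.map_eq.symm ▸ hG.1)]

lemma integrable_mul_comp_chordSq {ρ : F → ℝ} (hρ : Integrable ρ (sphereMeasure F))
    (hG : IntegrableOn G (Ioo 0 1)) :
    Integrable (fun p : F × F => ρ p.1 * G (chordSq p.1 p.2))
      ((sphereMeasure F).prod (sphereMeasure F)) :=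
  measurePreserving_prodMk_chordSq.integrable_comp_of_integrable (hρ.mul_prod hG)

end Plane

end SphereMeasure

section UnitInterval

lemma integrableOn_Ioo_zero_one_iff {G : ℝ → ℝ} :
    IntegrableOn G (Ioo 0 1) ↔ IntervalIntegrable G volume 0 1 :=
  (intervalIntegrable_iff_integrableOn_Ioo_of_le zero_le_one).symm

lemma integral_Ioo_zero_one (G : ℝ → ℝ) : ∫ r in Ioo (0 : ℝ) 1, G r = ∫ r in 0..1, G r := by
  rw [intervalIntegral.integral_of_le zero_le_one, integral_Ioc_eq_integral_Ioo]

lemma integrableOn_log_Ioo : IntegrableOn log (Ioo 0 1) :=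
  integrableOn_Ioo_zero_one_iff.2 intervalIntegral.intervalIntegrable_log'

lemma integral_log_Ioo : ∫ r in Ioo (0 : ℝ) 1, log r = -1 := by
  rw [integral_Ioo_zero_one, integral_log]
  simp

lemma integrableOn_exp_neg_mul_log_Ioo {c : ℝ} (hc : c < 1) :
    IntegrableOn (fun r => exp (-c * log r)) (Ioo 0 1) := by
  refine (integrableOn_Ioo_zero_one_iff.2
    (intervalIntegral.intervalIntegrable_rpow' (r := -c) (by linarith))).congr_fun
    (fun r hr => ?_) measurableSet_Ioo
  simp only [rpow_def_of_pos hr.1, mul_comm]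

lemma integral_exp_neg_mul_log_Ioo {c : ℝ} (hc : c < 1) :
    ∫ r in Ioo 0 1, exp (-c * log r) = (1 - c)⁻¹ := by
  have h0 : -c + 1 ≠ 0 := by linarith
  calc ∫ r in Ioo 0 1, exp (-c * log r) = ∫ r in Ioo 0 1, r ^ (-c) :=
        setIntegral_congr_fun measurableSet_Ioo fun r hr => by
          rw [rpow_def_of_pos hr.1, mul_comm]
    _ = (1 - c)⁻¹ := by
        rw [integral_Ioo_zero_one, integral_rpow (.inl (by linarith)), one_rpow, zero_rpow h0,
          sub_zero, one_div, neg_add_eq_sub]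

lemma integral_klFun_two_mul_Ioo : ∫ r in Ioo (0 : ℝ) 1, klFun (2 * r) = log 2 - 1 / 2 := by
  have hkl : Continuous fun r : ℝ => klFun (2 * r) := continuous_klFun.comp (by fun_prop)
  have : Continuous fun r : ℝ => 2 * r * log (2 * r) :=
    continuous_mul_log.comp (continuous_const.mul continuous_id)
  rw [integral_Ioo_zero_one, intervalIntegral.integral_eq_sub_of_hasDerivAt_of_le zero_le_one
    (f := fun r => r / 2 * (2 * r * log (2 * r)) + r - 3 / 2 * r ^ 2) (by fun_prop) _
    (hkl.intervalIntegrable _ _)]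
  · norm_num
    ring
  · intro r hr
    have hr0 : r ≠ 0 := hr.1.ne'
    have hlog : HasDerivAt (fun r => log (2 * r)) (2 / (2 * r)) r := by
      simpa using ((hasDerivAt_id r).const_mul 2).log (by simpa using hr0)
    refine (((((hasDerivAt_id r).div_const 2).mul
      (((hasDerivAt_id r).const_mul 2).mul hlog)).add (hasDerivAt_id r)).sub
      ((hasDerivAt_pow 2 r).const_mul (3 / 2))).congr_deriv ?_
    simp only [klFun, id, Pi.mul_apply]
    field_simp
    push_cast
    ring

end UnitInterval

section ChordInteraction

/-- The logarithmic kernel on the sphere, in stereographic coordinates. -/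
def logChordSq {F : Type*} [NormedAddCommGroup F] (x y : F) : ℝ := log (chordSq x y)

lemma logChordSq_nonpos {F : Type*} [NormedAddCommGroup F] [InnerProductSpace ℝ F] (x y : F) :
    logChordSq x y ≤ 0 :=
  log_nonpos (chordSq_nonneg x y) (chordSq_le_one x y)

lemma measurable_logChordSq_right {F : Type*} [NormedAddCommGroup F] [MeasurableSpace F]
    [BorelSpace F] (x : F) : Measurable (logChordSq x) :=
  measurable_log.comp (continuous_chordSq.comp (by fun_prop : Continuous (Prod.mk x))).measurable

variable {F : Type*} [NormedAddCommGroup F] [InnerProductSpace ℝ F] [FiniteDimensional ℝ F]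
  [MeasurableSpace F] [BorelSpace F]

lemma aestronglyMeasurable_invStereographic :
    AEStronglyMeasurable (invStereographic : F → WithLp 2 (F × ℝ)) (sphereMeasure F) :=
  continuous_invStereographic.aestronglyMeasurable

@[fun_prop]
lemma measurable_logChordSq : Measurable fun p : F × F => logChordSq p.1 p.2 := by
  unfold logChordSq
  fun_prop

lemma IsFiniteEntropyDensity.integrable_interaction_chordSq {ρ : F → ℝ}
    (hρ : IsFiniteEntropyDensity (sphereMeasure F) ρ) :
    Integrable (fun p => ρ p.1 * ρ p.2 * chordSq p.1 p.2)
      ((sphereMeasure F).prod (sphereMeasure F)) :=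
  (hρ.integrable.mul_prod hρ.integrable).mul_bdd (c := 1) continuous_chordSq.aestronglyMeasurable
    (.of_forall fun p => by
      rw [norm_of_nonneg (chordSq_nonneg _ _)]
      exact chordSq_le_one _ _)

lemma IsFiniteEntropyDensity.interaction_chordSq {ρ : F → ℝ}
    (hρ : IsFiniteEntropyDensity (sphereMeasure F) ρ) :
    interaction (sphereMeasure F) chordSq ρ
      = (1 - ‖barycenter (sphereMeasure F) invStereographic ρ‖ ^ 2) / 2 := by
  have h := interaction_inner_eq_norm_barycenter_sq aestronglyMeasurable_invStereographic
    (fun x => (norm_invStereographic x).le) hρ.integrable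
  have hexpand (p : F × F) : ρ p.1 * ρ p.2 * (1 - 2 * chordSq p.1 p.2)
      = ρ p.1 * ρ p.2 - 2 * (ρ p.1 * ρ p.2 * chordSq p.1 p.2) := by ring
  simp only [inner_invStereographic] at h
  simp only [interaction, hexpand] at h ⊢
  rw [integral_sub (hρ.integrable.mul_prod hρ.integrable)
    (hρ.integrable_interaction_chordSq.const_mul 2), integral_prod_mul, integral_const_mul,
    hρ.integral_eq_one] at h
  linarith

variable [Fact (Module.finrank ℝ F = 2)]

lemma ae_chordSq_pos :
    ∀ᵐ p ∂(sphereMeasure F).prod (sphereMeasure F), 0 < chordSq p.1 p.2 := by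
  have hae : ∀ᵐ q : F × ℝ ∂(sphereMeasure F).prod (volume.restrict (Ioo 0 1)), 0 < q.2 :=
    Measure.quasiMeasurePreserving_snd.ae
      ((ae_restrict_mem measurableSet_Ioo).mono fun r hr => hr.1)
  exact measurePreserving_prodMk_chordSq.quasiMeasurePreserving.ae hae

namespace IsFiniteEntropyDensity

variable {ρ : F → ℝ}

lemma integrable_interaction_logChordSq (hρ : IsFiniteEntropyDensity (sphereMeasure F) ρ) :
    Integrable (fun p => ρ p.1 * ρ p.2 * logChordSq p.1 p.2)
      ((sphereMeasure F).prod (sphereMeasure F)) := by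
  have hhalf : Integrable (fun p => ρ p.1 * ρ p.2 * (logChordSq p.1 p.2 / 2))
      ((sphereMeasure F).prod (sphereMeasure F)) := by
    refine hρ.integrable_interaction (K := fun x y => logChordSq x y / 2)
      (by fun_prop) ?_
    refine (integrable_mul_comp_chordSq hρ.integrable
      (integrableOn_exp_neg_mul_log_Ioo one_half_lt_one)).congr (.of_forall fun p => ?_)
    dsimp only
    rw [abs_of_nonpos (div_nonpos_of_nonpos_of_nonneg (logChordSq_nonpos p.1 p.2) zero_le_two),
      logChordSq, neg_mul, one_div_mul_eq_div]
  refine (hhalf.const_mul 2).congr (.of_forall fun p => ?_)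
  ring

lemma integral_le_interaction_powerSeries (hρ : IsFiniteEntropyDensity (sphereMeasure F) ρ)
    {c : ℕ → ℝ} (hc : ∀ n, 0 ≤ c n) {φ : ℝ → ℝ}
    (hφ : ∀ x, |x| < 1 → HasSum (fun n => c n * x ^ n) (φ x))
    (hmeas : Measurable φ) (hcont : ContinuousOn φ (Iio 1))
    (hmono : ∀ r ∈ Ioo (0 : ℝ) 1, ∀ t < 1, |φ (r * t)| ≤ |φ t|)
    (hφ1 : IntegrableOn (fun r => φ (1 - 2 * r)) (Ioo 0 1))
    (hint : Integrable (fun p => ρ p.1 * ρ p.2 * φ (1 - 2 * chordSq p.1 p.2))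
      ((sphereMeasure F).prod (sphereMeasure F))) :
    ∫ r in Ioo 0 1, φ (1 - 2 * r)
      ≤ interaction (sphereMeasure F) (fun x y => φ (1 - 2 * chordSq x y)) ρ := by
  have hsymm (x y : F) : φ (1 - 2 * chordSq x y) = φ (1 - 2 * chordSq y x) := by
    rw [chordSq_comm]
  have hK : Integrable (fun p : F × F => φ (1 - 2 * chordSq p.1 p.2))
      ((sphereMeasure F).prod (sphereMeasure F)) := by
    simpa using integrable_mul_comp_chordSq (F := F) (integrable_const 1) hφ1
  have hρK := integrable_mul_comp_chordSq hρ.integrable hφ1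
  have hne : ∀ᵐ p ∂(sphereMeasure F).prod (sphereMeasure F),
      ⟪invStereographic p.1, invStereographic p.2⟫_ℝ ≠ 1 := by
    filter_upwards [ae_chordSq_pos] with p hp
    rw [inner_invStereographic]
    linarith
  have hnonneg := interaction_inner_powerSeries_nonneg_of_le aestronglyMeasurable_invStereographic
    (fun x => (norm_invStereographic x).le) (h := fun x => ρ x - 1)
    (hρ.integrable.sub (integrable_const 1)) hne hc hφ hmeas hcont hmono (by
      simpa only [inner_invStereographic] using
        integrable_sub_one_mul_sub_one_mul hsymm hK hρK hint)
  have hcentre := interaction_sub_one (K := fun x y : F => φ (1 - 2 * chordSq x y)) hsymm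
    (fun x => integral_comp_chordSq x hφ1) hK hρK hint hρ.integral_eq_one
  simp only [inner_invStereographic] at hnonneg
  exact sub_nonneg.1 (hnonneg.trans_eq hcentre)

lemma interaction_logChordSq_le_neg_one (hρ : IsFiniteEntropyDensity (sphereMeasure F) ρ) :
    interaction (sphereMeasure F) logChordSq ρ ≤ -1 := by
  have hscale {r : ℝ} (hr : 0 < r) : -log (1 - (1 - 2 * r)) = -log 2 - log r := by
    rw [sub_sub_cancel, log_mul two_ne_zero hr.ne']
    ring
  have hconst : Integrable (fun p => ρ p.1 * ρ p.2 * -log 2)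
      ((sphereMeasure F).prod (sphereMeasure F)) :=
    (hρ.integrable.mul_prod hρ.integrable).mul_const _
  have hrewrite : (fun p => ρ p.1 * ρ p.2 * -log (1 - (1 - 2 * chordSq p.1 p.2)))
      =ᵐ[(sphereMeasure F).prod (sphereMeasure F)]
        fun p => ρ p.1 * ρ p.2 * -log 2 - ρ p.1 * ρ p.2 * logChordSq p.1 p.2 := by
    filter_upwards [ae_chordSq_pos] with p hp
    rw [hscale hp, mul_sub, logChordSq]
  have hunif : EqOn (fun r => -log (1 - (1 - 2 * r))) (fun r => -log 2 - log r) (Ioo 0 1) :=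
    fun r hr => hscale hr.1
  have hlog2 : IntegrableOn (fun _ : ℝ => -log 2) (Ioo 0 1) := by simp
  have hlog2' : ∫ _ in Ioo (0 : ℝ) 1, -log 2 = -log 2 := by simp
  have hle := hρ.integral_le_interaction_powerSeries (φ := fun x => -log (1 - x))
    (fun n => by positivity) (fun x => hasSum_neg_log_one_sub) (by fun_prop)
    (fun t ht => ContinuousAt.continuousWithinAt (by
      have : 1 - t ≠ 0 := (sub_pos.2 ht).ne'
      fun_prop (disch := exact this)))
    (fun r hr t ht => by simpa using abs_log_one_sub_mul_le hr ht)
    ((hlog2.sub integrableOn_log_Ioo).congr_fun hunif.symm measurableSet_Ioo)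
    ((hconst.sub hρ.integrable_interaction_logChordSq).congr hrewrite.symm)
  rw [interaction, integral_congr_ae hrewrite, integral_sub hconst
    hρ.integrable_interaction_logChordSq, integral_mul_const, integral_prod_mul,
    hρ.integral_eq_one, setIntegral_congr_fun measurableSet_Ioo hunif,
    integral_sub hlog2 integrableOn_log_Ioo, integral_log_Ioo, hlog2'] at hle
  rw [interaction]
  linarith

lemma interaction_klFun_chordSq (hρ : IsFiniteEntropyDensity (sphereMeasure F) ρ) :
    interaction (sphereMeasure F) (fun x y => klFun (2 * chordSq x y)) ρ
      = interaction (sphereMeasure F) logChordSq ρ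
        - interaction (sphereMeasure F)
          (fun x y => ⟪invStereographic x, invStereographic y⟫_ℝ * logChordSq x y) ρ
        + (1 - ‖barycenter (sphereMeasure F) invStereographic ρ‖ ^ 2) * (log 2 - 1) + 1 := by
  have hL := hρ.integrable_interaction_logChordSq
  have hσL := integrable_interaction_inner_mul aestronglyMeasurable_invStereographic
    (fun x => (norm_invStereographic x).le) hL
  have hk := hρ.integrable_interaction_chordSq.mul_const (2 * log 2 - 2)
  have hLσL := hL.sub hσL
  have hrewrite : (fun p => ρ p.1 * ρ p.2 * klFun (2 * chordSq p.1 p.2))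
      =ᵐ[(sphereMeasure F).prod (sphereMeasure F)] fun p =>
        ρ p.1 * ρ p.2 * logChordSq p.1 p.2
          - ρ p.1 * ρ p.2
            * (⟪invStereographic p.1, invStereographic p.2⟫_ℝ * logChordSq p.1 p.2)
          + ρ p.1 * ρ p.2 * chordSq p.1 p.2 * (2 * log 2 - 2) + ρ p.1 * ρ p.2 := by
    filter_upwards [ae_chordSq_pos] with p hp
    rw [inner_invStereographic, logChordSq, klFun, log_mul two_ne_zero hp.ne']
    ring
  have hchord := hρ.interaction_chordSq
  simp only [interaction] at hchord ⊢
  rw [integral_congr_ae hrewrite]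
  refine (integral_add (hLσL.add hk) (hρ.integrable.mul_prod hρ.integrable)).trans ?_
  rw [integral_add' hLσL hk, integral_sub' hL hσL, integral_mul_const, integral_prod_mul,
    hρ.integral_eq_one, hchord]
  ring

lemma interaction_inner_mul_logChordSq_le (hρ : IsFiniteEntropyDensity (sphereMeasure F) ρ) :
    interaction (sphereMeasure F)
        (fun x y => ⟪invStereographic x, invStereographic y⟫_ℝ * logChordSq x y) ρ
      ≤ interaction (sphereMeasure F) logChordSq ρ + 1 / 2
        + ‖barycenter (sphereMeasure F) invStereographic ρ‖ ^ 2 := by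
  have hcoeff (n : ℕ) : (0 : ℝ) ≤ 1 / (n * (n - 1)) := by
    rcases n.eq_zero_or_pos with rfl | hn
    · simp
    · have : (1 : ℝ) ≤ n := mod_cast hn
      exact one_div_nonneg.2 (mul_nonneg n.cast_nonneg (sub_nonneg.2 this))
  have hcont : Continuous fun t => klFun (1 - t) := continuous_klFun.comp (by fun_prop)
  have hmono (r) (hr : r ∈ Ioo (0 : ℝ) 1) (t) (ht : t < 1) :
      |klFun (1 - r * t)| ≤ |klFun (1 - t)| := by
    have hrt : r * t ≤ 1 := by nlinarith [hr.1, hr.2]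
    rw [abs_of_nonneg (klFun_nonneg (sub_nonneg.2 hrt)),
      abs_of_nonneg (klFun_nonneg (sub_nonneg.2 ht.le))]
    exact klFun_one_sub_mul_le hr ht
  have hint := integrable_mul_comp_of_abs_le (hρ.integrable.mul_prod hρ.integrable)
    continuous_chordSq.aestronglyMeasurable (C := 1)
    (fun p => (abs_of_nonneg (chordSq_nonneg p.1 p.2)).trans_le (chordSq_le_one p.1 p.2))
    (hcont.comp (by fun_prop : Continuous fun s : ℝ => 1 - 2 * s))
  have hle := hρ.integral_le_interaction_powerSeries hcoeff (fun x => hasSum_klFun_one_sub)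
    hcont.measurable hcont.continuousOn hmono
    ((hcont.comp (by fun_prop)).integrableOn_Icc.mono_set Ioo_subset_Icc_self) hint
  simp only [sub_sub_cancel] at hle
  rw [integral_klFun_two_mul_Ioo, hρ.interaction_klFun_chordSq] at hle
  have : 0 ≤ log 2 * ‖barycenter (sphereMeasure F) invStereographic ρ‖ ^ 2 :=
    mul_nonneg (log_nonneg one_le_two) (sq_nonneg _)
  linarith

lemma log_one_sub_le_entropy_add (hρ : IsFiniteEntropyDensity (sphereMeasure F) ρ) {c : ℝ}
    (hc0 : 0 ≤ c) (hc1 : c < 1) :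
    log (1 - c) ≤ entropy (sphereMeasure F) ρ + c * interaction (sphereMeasure F) logChordSq ρ := by
  have habs (x y : F) : |-c * logChordSq x y| = -c * logChordSq x y :=
    abs_of_nonneg (mul_nonneg_of_nonpos_of_nonpos (neg_nonpos.2 hc0) (logChordSq_nonpos x y))
  have hscale (p : F × F) :
      ρ p.1 * ρ p.2 * (-c * logChordSq p.1 p.2) = -c * (ρ p.1 * ρ p.2 * logChordSq p.1 p.2) := by
    ring
  have hG := integrableOn_exp_neg_mul_log_Ioo hc1
  have hexp (x : F) : Integrable (fun y => exp |-c * logChordSq x y|) (sphereMeasure F) := by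
    simp only [habs]
    simpa only [logChordSq] using integrable_comp_chordSq x hG
  have hpart (x : F) : ∫ y, exp (-c * logChordSq x y) ∂sphereMeasure F = (1 - c)⁻¹ := by
    rw [← integral_exp_neg_mul_log_Ioo hc1, ← integral_comp_chordSq x hG]
    rfl
  have h := hρ.interaction_le_entropy_add_log (K := fun x y => -c * logChordSq x y)
    (inv_pos.2 (sub_pos.2 hc1))
    (fun x => ((measurable_logChordSq_right x).const_mul _).aestronglyMeasurable)
    hexp hpart (by simpa only [hscale] using hρ.integrable_interaction_logChordSq.const_mul (-c))
  simp only [interaction, hscale] at h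
  rw [integral_const_mul, log_inv] at h
  rw [interaction]
  linarith

end IsFiniteEntropyDensity

end ChordInteraction

section Conformal

lemma integrable_mul_comp_of_measurePreserving {X Y : Type*} [MeasurableSpace X]
    [MeasurableSpace Y] {μ : Measure X} {ν : Measure Y} {S : X → Y} {w : X → ℝ}
    (hw : Measurable w) (hw0 : ∀ x, 0 ≤ w x)
    (hS : MeasurePreserving S (μ.withDensity fun x => ENNReal.ofReal (w x)) ν) {G : Y → ℝ}
    (hG : Integrable G ν) : Integrable (fun x => w x * G (S x)) μ := by
  have h := hS.integrable_comp_of_integrable hG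
  rw [integrable_withDensity_iff_integrable_smul' (by fun_prop) (by simp)] at h
  simpa only [ENNReal.toReal_ofReal (hw0 _), smul_eq_mul, Function.comp_apply] using h

lemma integral_mul_comp_of_measurePreserving {X Y : Type*} [MeasurableSpace X]
    [MeasurableSpace Y] {μ : Measure X} {ν : Measure Y} {S : X → Y} {w : X → ℝ}
    (hw : Measurable w) (hw0 : ∀ x, 0 ≤ w x)
    (hS : MeasurePreserving S (μ.withDensity fun x => ENNReal.ofReal (w x)) ν) {G : Y → ℝ}
    (hG : Integrable G ν) : ∫ x, w x * G (S x) ∂μ = ∫ y, G y ∂ν := by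
  have hGS : AEStronglyMeasurable G (Measure.map S (μ.withDensity fun x => ENNReal.ofReal (w x))) :=
    hS.map_eq.symm ▸ hG.aestronglyMeasurable
  rw [← hS.map_eq, integral_map hS.aemeasurable hGS,
    integral_withDensity_eq_integral_toReal_smul (by fun_prop) (by simp)]
  simp only [ENNReal.toReal_ofReal (hw0 _), smul_eq_mul]

lemma mul_log_exp_mul (s l : ℝ) :
    exp l * s * log (exp l * s) = exp l * (s * log s + s * l) := by
  rcases eq_or_ne s 0 with rfl | hs
  · simp
  · rw [log_mul (exp_pos l).ne' hs, log_exp]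
    ring

variable {Ω : Type*} [MeasurableSpace Ω] {m : Measure Ω}

/-- Changes of variables `T` with Jacobian `exp ∘ ℓ ∘ T` relative to `m` for which the kernel `K`
transforms like the logarithm of a squared distance under a conformal map of a surface. -/
structure IsConformal (m : Measure Ω) (K : Ω → Ω → ℝ) (T : Ω → Ω) (ℓ : Ω → ℝ) : Prop where
  measurable : Measurable T
  measurable_log_jacobian : Measurable ℓ
  bounded : ∃ C, ∀ x, |ℓ x| ≤ C
  measurePreserving :
    MeasurePreserving T (m.withDensity fun x => ENNReal.ofReal (exp (ℓ (T x)))) m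
  kernel_comp : ∀ᵐ p ∂m.prod m, K (T p.1) (T p.2) = K p.1 p.2 + (ℓ (T p.1) + ℓ (T p.2)) / 2

namespace IsConformal

variable {K : Ω → Ω → ℝ} {T : Ω → Ω} {ℓ ρ : Ω → ℝ}

lemma measurable_jacobian (hT : IsConformal m K T ℓ) : Measurable fun x => exp (ℓ (T x)) :=
  measurable_exp.comp (hT.measurable_log_jacobian.comp hT.measurable)

lemma integrable_mul_log_jacobian (hT : IsConformal m K T ℓ) (hρ : Integrable ρ m) :
    Integrable (fun x => ρ x * ℓ x) m := by
  obtain ⟨C, hC⟩ := hT.bounded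
  exact integrable_mul_comp_of_abs_le hρ hT.measurable_log_jacobian.aestronglyMeasurable hC
    continuous_id

lemma measurePreserving_prodMap [SFinite m] (hT : IsConformal m K T ℓ) :
    MeasurePreserving (Prod.map T T) ((m.prod m).withDensity fun p =>
      ENNReal.ofReal (exp (ℓ (T p.1)) * exp (ℓ (T p.2)))) (m.prod m) := by
  have h := hT.measurePreserving.prod hT.measurePreserving
  have hJ := hT.measurable_jacobian.ennreal_ofReal
  rw [prod_withDensity hJ hJ] at h
  simpa only [ENNReal.ofReal_mul (exp_pos _).le] using h

lemma isFiniteEntropyDensity (hT : IsConformal m K T ℓ) (hρ : IsFiniteEntropyDensity m ρ) :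
    IsFiniteEntropyDensity m fun x => exp (ℓ (T x)) * ρ (T x) := by
  have hJ0 (x : Ω) : 0 ≤ exp (ℓ (T x)) := (exp_pos _).le
  refine ⟨?_, ?_, ?_, ?_⟩
  · have hac := withDensity_absolutelyContinuous' (μ := m)
      hT.measurable_jacobian.ennreal_ofReal.aemeasurable
      (.of_forall fun x => (ENNReal.ofReal_pos.2 (exp_pos _)).ne')
    filter_upwards [hac.ae_le (hT.measurePreserving.quasiMeasurePreserving.ae hρ.nonneg)] with x hx
    exact mul_nonneg (hJ0 x) hx
  · exact integrable_mul_comp_of_measurePreserving hT.measurable_jacobian hJ0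
      hT.measurePreserving hρ.integrable
  · rw [integral_mul_comp_of_measurePreserving hT.measurable_jacobian hJ0
      hT.measurePreserving hρ.integrable, hρ.integral_eq_one]
  · simp only [mul_log_exp_mul]
    exact integrable_mul_comp_of_measurePreserving hT.measurable_jacobian hJ0
      hT.measurePreserving
      (hρ.integrable_mul_log.add (hT.integrable_mul_log_jacobian hρ.integrable))

lemma entropy_comp (hT : IsConformal m K T ℓ) (hρ : IsFiniteEntropyDensity m ρ) :
    entropy m (fun x => exp (ℓ (T x)) * ρ (T x)) = entropy m ρ + ∫ x, ρ x * ℓ x ∂m := by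
  have hℓ := hT.integrable_mul_log_jacobian hρ.integrable
  simp only [entropy, mul_log_exp_mul]
  rw [← integral_add hρ.integrable_mul_log hℓ]
  exact integral_mul_comp_of_measurePreserving hT.measurable_jacobian (fun x => (exp_pos _).le)
    hT.measurePreserving (hρ.integrable_mul_log.add hℓ)

lemma interaction_comp [SFinite m] (hT : IsConformal m K T ℓ) (hρ : IsFiniteEntropyDensity m ρ)
    (hK : Integrable (fun p => ρ p.1 * ρ p.2 * K p.1 p.2) (m.prod m)) :
    interaction m K (fun x => exp (ℓ (T x)) * ρ (T x)) = interaction m K ρ - ∫ x, ρ x * ℓ x ∂m := by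
  have hℓ := hT.integrable_mul_log_jacobian hρ.integrable
  have hfst := (hℓ.mul_prod hρ.integrable).div_const 2
  have hsnd := (hρ.integrable.mul_prod hℓ).div_const 2
  have hG := (hK.sub hfst).sub hsnd
  have hrewrite : (fun p : Ω × Ω =>
      exp (ℓ (T p.1)) * ρ (T p.1) * (exp (ℓ (T p.2)) * ρ (T p.2)) * K p.1 p.2)
      =ᵐ[m.prod m] fun p => exp (ℓ (T p.1)) * exp (ℓ (T p.2))
        * (ρ (T p.1) * ρ (T p.2) * K (T p.1) (T p.2)
          - ρ (T p.1) * ℓ (T p.1) * ρ (T p.2) / 2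
          - ρ (T p.1) * (ρ (T p.2) * ℓ (T p.2)) / 2) := by
    filter_upwards [hT.kernel_comp] with p hp
    rw [hp]
    ring
  rw [interaction, integral_congr_ae hrewrite]
  refine (integral_mul_comp_of_measurePreserving
    ((hT.measurable_jacobian.comp measurable_fst).mul (hT.measurable_jacobian.comp measurable_snd))
    (fun p => (mul_pos (exp_pos _) (exp_pos _)).le) hT.measurePreserving_prodMap hG).trans ?_
  rw [integral_sub' (hK.sub hfst) hsnd, integral_sub' hK hfst, integral_div, integral_div,
    integral_prod_mul (fun x => ρ x * ℓ x) ρ, integral_prod_mul ρ fun x => ρ x * ℓ x,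
    hρ.integral_eq_one, interaction]
  ring

lemma freeEnergy_comp [SFinite m] (hT : IsConformal m K T ℓ) (hρ : IsFiniteEntropyDensity m ρ)
    (hK : Integrable (fun p => ρ p.1 * ρ p.2 * K p.1 p.2) (m.prod m)) (β : ℝ) :
    freeEnergy m K β (fun x => exp (ℓ (T x)) * ρ (T x))
      = freeEnergy m K β ρ + (1 - β) * ∫ x, ρ x * ℓ x ∂m := by
  rw [freeEnergy, hT.entropy_comp hρ, hT.interaction_comp hρ hK, freeEnergy]
  ring

end IsConformal

end Conformal

section Similarity

variable {F : Type*} [NormedAddCommGroup F] [InnerProductSpace ℝ F]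

/-- The logarithm, as a function of `x`, of the spherical Jacobian of the similarity that sends
`q • x - c` to `x`, read in stereographic coordinates. -/
def similarityLogJacobian (q : ℝ) (c x : F) : ℝ :=
  2 * (log (1 + ‖q • x - c‖ ^ 2) - log (1 + ‖x‖ ^ 2) - log q)

lemma log_one_add_norm_smul_sub_sq_le (q : ℝ) (c x : F) :
    log (1 + ‖q • x - c‖ ^ 2)
      ≤ log (1 + 2 * q ^ 2 + 2 * ‖c‖ ^ 2) + log (1 + ‖x‖ ^ 2) := by
  have hx := one_add_norm_sq_pos x
  rw [← log_mul (by positivity) hx.ne']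
  refine log_le_log (one_add_norm_sq_pos _) ?_
  have h := parallelogram_law_with_norm ℝ (q • x) c
  rw [norm_smul, norm_eq_abs] at h
  nlinarith [sq_abs q, sq_nonneg ‖q • x + c‖, mul_nonneg (sq_nonneg ‖c‖) (sq_nonneg ‖x‖),
    sq_nonneg ‖x‖, sq_nonneg q]

lemma exists_abs_similarityLogJacobian_le {q : ℝ} (hq : q ≠ 0) (c : F) :
    ∃ C, ∀ x, |similarityLogJacobian q c x| ≤ C := by
  refine ⟨2 * (|log (1 + 2 * q ^ 2 + 2 * ‖c‖ ^ 2)|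
    + |log (1 + 2 * q⁻¹ ^ 2 + 2 * ‖-(q⁻¹ • c)‖ ^ 2)| + |log q|), fun x => ?_⟩
  have hle := log_one_add_norm_smul_sub_sq_le q c x
  have hge := log_one_add_norm_smul_sub_sq_le q⁻¹ (-(q⁻¹ • c)) (q • x - c)
  rw [smul_sub, inv_smul_smul₀ hq, sub_neg_eq_add, sub_add_cancel] at hge
  have hA := abs_le.1 (le_refl |log (1 + 2 * q ^ 2 + 2 * ‖c‖ ^ 2)|)
  have hB := abs_le.1 (le_refl |log (1 + 2 * q⁻¹ ^ 2 + 2 * ‖-(q⁻¹ • c)‖ ^ 2)|)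
  have hq := abs_le.1 (le_refl |log q|)
  rw [similarityLogJacobian, abs_le]
  constructor <;> linarith

lemma exp_similarityLogJacobian {q : ℝ} (hq : 0 < q) (c x : F) :
    exp (similarityLogJacobian q c x)
      = (q ^ 2)⁻¹ * sphereDensity x / sphereDensity (q • x - c) := by
  have hx := one_add_norm_sq_pos x
  have hy := one_add_norm_sq_pos (q • x - c)
  have hsq (z : ℝ) : exp (2 * z) = exp z ^ 2 := exp_nat_mul z 2
  rw [similarityLogJacobian, hsq, exp_sub, exp_sub, exp_log hx, exp_log hy, exp_log hq,
    sphereDensity, sphereDensity]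
  field_simp

lemma logChordSq_inv_smul_add {q : ℝ} (hq : 0 < q) (c : F) {x y : F} (hxy : x ≠ y) :
    logChordSq (q⁻¹ • (x + c)) (q⁻¹ • (y + c)) = logChordSq x y
      + (similarityLogJacobian q c (q⁻¹ • (x + c))
        + similarityLogJacobian q c (q⁻¹ • (y + c))) / 2 := by
  have hne : q⁻¹ • (x + c) ≠ q⁻¹ • (y + c) :=
    (smul_right_injective F (inv_ne_zero hq.ne')).ne (by simpa using hxy)
  have hnorm : ‖q⁻¹ • (x + c) - q⁻¹ • (y + c)‖ = q⁻¹ * ‖x - y‖ := by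
    rw [← smul_sub, add_sub_add_right_eq_sub, norm_smul, norm_of_nonneg (inv_pos.2 hq).le]
  have hxy' : ‖x - y‖ ≠ 0 := norm_ne_zero_iff.2 (sub_ne_zero.2 hxy)
  rw [logChordSq, logChordSq, log_chordSq hne, log_chordSq hxy, hnorm,
    log_mul (inv_ne_zero hq.ne') hxy', log_inv, similarityLogJacobian, similarityLogJacobian,
    smul_inv_smul₀ hq.ne', smul_inv_smul₀ hq.ne', add_sub_cancel_right, add_sub_cancel_right]
  ring

lemma one_half_le_one_sub_mul_snd {G : Type*} [NormedAddCommGroup G] {v : WithLp 2 (G × ℝ)}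
    (hv : ‖v‖ = 1) {t : ℝ} (ht0 : 0 ≤ t) (ht : t ≤ 1 / 2) : 1 / 2 ≤ 1 - t * v.snd := by
  have hsnd : v.snd ≤ 1 := (le_abs_self _).trans ((WithLp.norm_snd_le _ v).trans_eq hv)
  have := mul_le_of_le_one_right ht0 hsnd
  linarith

/-- To first order in `t`, the similarity flows along the gradient of `⟪·, v⟫` on the sphere, which
explains the choice of `q` and `c`. -/
lemma similarityLogJacobian_le {v : WithLp 2 (F × ℝ)} (hv : ‖v‖ = 1) {t : ℝ} (ht0 : 0 ≤ t)
    (ht : t ≤ 1 / 2) (x : F) :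
    similarityLogJacobian (1 - t * v.snd) (t • v.fst) x
      ≤ 2 * (2 * t ^ 2 - t * ⟪invStereographic x, v⟫_ℝ) := by
  have hv' : ‖v.fst‖ ^ 2 + v.snd ^ 2 = 1 := by
    have := WithLp.prod_norm_sq_eq_of_L2 v
    rw [hv, norm_eq_abs, sq_abs] at this
    linarith
  obtain ⟨q, hq⟩ : ∃ q, q = 1 - t * v.snd := ⟨_, rfl⟩
  have hq2 : 1 / 2 ≤ q := hq.symm ▸ one_half_le_one_sub_mul_snd hv ht0 ht
  have hq0 : 0 < q := by linarith
  have hx := one_add_norm_sq_pos x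
  have hy := one_add_norm_sq_pos (q • x - t • v.fst)
  have hexpand : ‖q • x - t • v.fst‖ ^ 2
      = q ^ 2 * ‖x‖ ^ 2 - 2 * q * t * ⟪x, v.fst⟫_ℝ + t ^ 2 * ‖v.fst‖ ^ 2 := by
    rw [norm_sub_sq_real, norm_smul, norm_smul, real_inner_smul_left, real_inner_smul_right,
      mul_pow, mul_pow, norm_eq_abs, norm_eq_abs, sq_abs, sq_abs]
    ring
  have hlog := log_le_sub_one_of_pos (div_pos hy (mul_pos hx hq0))
  rw [log_div hy.ne' (mul_pos hx hq0).ne', log_mul hx.ne' hq0.ne', ← sub_sub] at hlog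
  rw [similarityLogJacobian, ← hq]
  refine mul_le_mul_of_nonneg_left (hlog.trans ?_) zero_le_two
  rw [inner_invStereographic_left, hexpand, sub_le_iff_le_add, div_le_iff₀ (mul_pos hx hq0)]
  have hone : t ^ 2 * 1 ≤ t ^ 2 * (2 * (q * (1 + ‖x‖ ^ 2))) :=
    mul_le_mul_of_nonneg_left (by nlinarith [sq_nonneg ‖x‖]) (sq_nonneg t)
  have hcancel : (1 + ‖x‖ ^ 2)⁻¹ * (1 + ‖x‖ ^ 2) = 1 := inv_mul_cancel₀ hx.ne'
  subst hq
  linear_combination hone + t ^ 2 * hv'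
    + t * (1 - t * v.snd) * (2 * ⟪x, v.fst⟫_ℝ + (‖x‖ ^ 2 - 1) * v.snd) * hcancel

variable [FiniteDimensional ℝ F] [MeasurableSpace F] [BorelSpace F]
  [Fact (Module.finrank ℝ F = 2)]

lemma map_inv_smul_add_volume {q : ℝ} (hq : 0 < q) (c : F) :
    (volume : Measure F).map (fun y => q⁻¹ • (y + c)) = ENNReal.ofReal (q ^ 2) • volume := by
  have hsmul := Measure.map_addHaar_smul (volume : Measure F) (inv_ne_zero hq.ne')
  rw [(Fact.out : Module.finrank ℝ F = 2)] at hsmul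
  rw [← Function.comp_def (q⁻¹ • ·) (· + c), ← Measure.map_map (by fun_prop) (by fun_prop),
    (measurePreserving_add_right (volume : Measure F) c).map_eq, hsmul, inv_pow, inv_inv,
    abs_of_nonneg (sq_nonneg q)]

lemma measurePreserving_inv_smul_add {q : ℝ} (hq : 0 < q) (c : F) :
    MeasurePreserving (fun y : F => q⁻¹ • (y + c)) ((sphereMeasure F).withDensity fun y =>
      ENNReal.ofReal (exp (similarityLogJacobian q c (q⁻¹ • (y + c))))) (sphereMeasure F) := by
  have hT : Measurable fun y : F => q⁻¹ • (y + c) := by fun_prop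
  have hdensity : (sphereMeasure F).withDensity (fun y =>
      ENNReal.ofReal (exp (similarityLogJacobian q c (q⁻¹ • (y + c)))))
      = ENNReal.ofReal (q ^ 2)⁻¹ • volume.withDensity
        ((fun x : F => ENNReal.ofReal (sphereDensity x)) ∘ fun y => q⁻¹ • (y + c)) := by
    rw [sphereMeasure, ← withDensity_mul _ (by fun_prop)
      (by unfold similarityLogJacobian; fun_prop), ← withDensity_smul _ (by fun_prop)]
    congr 1 with y
    have hy := sphereDensity_pos y
    simp only [Pi.mul_apply, Pi.smul_apply, smul_eq_mul, Function.comp_apply]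
    rw [← ENNReal.ofReal_mul hy.le, ← ENNReal.ofReal_mul (by positivity),
      exp_similarityLogJacobian hq, smul_inv_smul₀ hq.ne', add_sub_cancel_right,
      mul_div_cancel₀ _ hy.ne']
  refine ⟨hT, ?_⟩
  rw [hdensity, Measure.map_smul, map_withDensity_comp hT (by fun_prop), map_inv_smul_add_volume hq,
    withDensity_smul_measure, smul_smul, ← ENNReal.ofReal_mul (by positivity),
    inv_mul_cancel₀ (by positivity), ENNReal.ofReal_one, one_smul, sphereMeasure]

lemma isConformal_inv_smul_add {q : ℝ} (hq : 0 < q) (c : F) :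
    IsConformal (sphereMeasure F) logChordSq (fun y => q⁻¹ • (y + c))
      (similarityLogJacobian q c) where
  measurable := by fun_prop
  measurable_log_jacobian := by
    unfold similarityLogJacobian
    fun_prop
  bounded := exists_abs_similarityLogJacobian_le hq.ne' c
  measurePreserving := measurePreserving_inv_smul_add hq c
  kernel_comp := by
    filter_upwards [ae_chordSq_pos] with p hp
    exact logChordSq_inv_smul_add hq c fun h => hp.ne' (by simp [chordSq, h])

end Similarity

section LogHLS

variable {F : Type*} [NormedAddCommGroup F] [InnerProductSpace ℝ F] [FiniteDimensional ℝ F]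
  [MeasurableSpace F] [BorelSpace F]

lemma IsFiniteEntropyDensity.integral_mul_similarityLogJacobian_le {ρ : F → ℝ}
    (hρ : IsFiniteEntropyDensity (sphereMeasure F) ρ) {v : WithLp 2 (F × ℝ)} (hv : ‖v‖ = 1)
    {t : ℝ} (ht0 : 0 ≤ t) (ht : t ≤ 1 / 2)
    (hℓ : Integrable (fun x => ρ x * similarityLogJacobian (1 - t * v.snd) (t • v.fst) x)
      (sphereMeasure F)) :
    ∫ x, ρ x * similarityLogJacobian (1 - t * v.snd) (t • v.fst) x ∂sphereMeasure F
      ≤ 4 * t ^ 2 - 2 * t * ⟪barycenter (sphereMeasure F) invStereographic ρ, v⟫_ℝ := by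
  have hσ := aestronglyMeasurable_invStereographic (F := F)
  have hσ1 (x : F) : ‖invStereographic x‖ ≤ 1 := (norm_invStereographic x).le
  have hinner : Integrable (fun x => ρ x * ⟪invStereographic x, v⟫_ℝ) (sphereMeasure F) :=
    hρ.integrable.mul_bdd (c := 1) hσ.inner_const (.of_forall fun x =>
      norm_inner_le_one (hσ1 x) hv.le)
  calc ∫ x, ρ x * similarityLogJacobian (1 - t * v.snd) (t • v.fst) x ∂sphereMeasure F
      ≤ ∫ x, (ρ x * (4 * t ^ 2) - 2 * t * (ρ x * ⟪invStereographic x, v⟫_ℝ))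
          ∂sphereMeasure F := by
        refine integral_mono_ae hℓ ((hρ.integrable.mul_const _).sub (hinner.const_mul _))
          (hρ.nonneg.mono fun x hx => ?_)
        have := mul_le_mul_of_nonneg_left (similarityLogJacobian_le hv ht0 ht x) hx
        dsimp only
        linarith
    _ = _ := by
        rw [integral_sub (hρ.integrable.mul_const _) (hinner.const_mul _), integral_mul_const,
          integral_const_mul, integral_mul_inner_eq_inner_barycenter hσ hσ1 hρ.integrable,
          hρ.integral_eq_one, one_mul]

variable [Fact (Module.finrank ℝ F = 2)]

namespace IsAlmostMinimizer

variable {ρ : F → ℝ} {β ε u : ℝ}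

lemma mul_inner_barycenter_le (hρ : IsAlmostMinimizer (sphereMeasure F) logChordSq β ε ρ)
    (hβ1 : β < 1) {t : ℝ} (ht0 : 0 ≤ t) (ht : t ≤ 1 / 2) {v : WithLp 2 (F × ℝ)} (hv : ‖v‖ = 1) :
    t * ⟪barycenter (sphereMeasure F) invStereographic ρ, v⟫_ℝ
      ≤ 2 * t ^ 2 + ε / (2 * (1 - β)) := by
  have hβ : 0 < 1 - β := sub_pos.2 hβ1
  have hq : 0 < 1 - t * v.snd := by linarith [one_half_le_one_sub_mul_snd hv ht0 ht]
  have hT := isConformal_inv_smul_add (F := F) hq (t • v.fst)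
  have hmin := hρ.freeEnergy_le _ (hT.isFiniteEntropyDensity hρ.toIsFiniteEntropyDensity)
  rw [hT.freeEnergy_comp hρ.toIsFiniteEntropyDensity hρ.integrable_interaction_logChordSq] at hmin
  have hle := mul_le_mul_of_nonneg_left (hρ.integral_mul_similarityLogJacobian_le hv ht0 ht
    (hT.integrable_mul_log_jacobian hρ.integrable)) hβ.le
  rw [← sub_le_iff_le_add', le_div_iff₀ (by linarith)]
  linarith

lemma mul_norm_barycenter_le (hρ : IsAlmostMinimizer (sphereMeasure F) logChordSq β ε ρ)
    (hβ1 : β < 1) {t : ℝ} (ht0 : 0 ≤ t) (ht : t ≤ 1 / 2) :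
    t * ‖barycenter (sphereMeasure F) invStereographic ρ‖ ≤ 2 * t ^ 2 + ε / (2 * (1 - β)) := by
  set a := barycenter (sphereMeasure F) invStereographic ρ with ha
  rcases eq_or_ne a 0 with h0 | h0
  · have hε : 0 ≤ ε := by linarith [hρ.freeEnergy_le ρ hρ.toIsFiniteEntropyDensity]
    have : 0 < 1 - β := sub_pos.2 hβ1
    rw [h0, norm_zero, mul_zero]
    positivity
  · have h := hρ.mul_inner_barycenter_le hβ1 ht0 ht (norm_smul_inv_norm (𝕜 := ℝ) h0)
    rwa [← ha, RCLike.ofReal_real_eq_id, id_eq, real_inner_smul_right, real_inner_self_eq_norm_sq,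
      sq, inv_mul_cancel_left₀ (norm_ne_zero_iff.2 h0)] at h

lemma neg_interaction_logChordSq_le
    (hρ : IsAlmostMinimizer (sphereMeasure F) logChordSq β ε ρ) (hε : ε ≤ 1) (hβ0 : 0 ≤ β)
    (hβ1 : β < 1) : -interaction (sphereMeasure F) logChordSq ρ
      ≤ (1 - log ((1 - β) / 2)) / ((1 - β) / 2) := by
  have hone : IsFiniteEntropyDensity (sphereMeasure F) fun _ => (1 : ℝ) :=
    IsFiniteEntropyDensity.one
  have hmin := hρ.freeEnergy_le _ hone
  have hL := mul_nonpos_of_nonneg_of_nonpos hβ0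
    (hone.interaction_logChordSq_le_neg_one.trans (by norm_num))
  have hentropy : entropy (sphereMeasure F) (fun _ => (1 : ℝ)) = 0 := by simp [entropy]
  have hcoercive := hρ.log_one_sub_le_entropy_add (c := (1 + β) / 2) (by linarith) (by linarith)
  rw [show 1 - (1 + β) / 2 = (1 - β) / 2 by ring] at hcoercive
  rw [freeEnergy, freeEnergy, hentropy] at hmin
  rw [le_div_iff₀ (by linarith)]
  linarith

/-- A perturbation of size `u` has a second variation of order `u ^ 2`, so an almost minimizer
whose error is of order `u ^ 3` is as good as a minimizer. -/
lemma neg_le_freeEnergy (hρ : IsAlmostMinimizer (sphereMeasure F) logChordSq β (u ^ 3) ρ)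
    (hβ0 : 0 ≤ β) (hu0 : 0 < u) (hu : u ≤ 1 / 4) :
    -(1 + β) / 2 - 7 * u - β * (‖barycenter (sphereMeasure F) invStereographic ρ‖ ^ 2
        + 2 * ‖barycenter (sphereMeasure F) invStereographic ρ‖
          * -interaction (sphereMeasure F) logChordSq ρ)
      ≤ freeEnergy (sphereMeasure F) logChordSq β ρ := by
  have hK := hρ.integrable_interaction_logChordSq
  have hvar := hρ.sum_second_variation_nonneg hK aestronglyMeasurable_invStereographic
    norm_invStereographic hu0.le hu
  have hcentre := (interaction_inner_sub_mul_le aestronglyMeasurable_invStereographic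
    (fun x => (norm_invStereographic x).le) logChordSq_nonpos hρ.nonneg hK
    (barycenter (sphereMeasure F) invStereographic ρ)).trans
      (sub_le_sub_right hρ.interaction_inner_mul_logChordSq_le _)
  have hdim : Module.finrank ℝ (WithLp 2 (F × ℝ)) = 3 := by
    rw [(WithLp.linearEquiv 2 ℝ (F × ℝ)).finrank_eq, Module.finrank_prod,
      (Fact.out : Module.finrank ℝ F = 2), Module.finrank_self]
  rw [hdim] at hvar
  have hscaled : 0 ≤ 14 * u + 1 + 2 * β * interaction (sphereMeasure F) (fun x y =>
      ⟪invStereographic x - barycenter (sphereMeasure F) invStereographic ρ,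
        invStereographic y - barycenter (sphereMeasure F) invStereographic ρ⟫_ℝ
        * logChordSq x y) ρ := by
    refine nonneg_of_mul_nonneg_right (hvar.trans_eq ?_) (sq_pos_of_pos hu0)
    push_cast
    ring
  have hbound := mul_le_mul_of_nonneg_left hcentre hβ0
  have := hρ.entropy_nonneg
  rw [freeEnergy]
  linarith

end IsAlmostMinimizer

namespace IsFiniteEntropyDensity

variable {ρ : F → ℝ} {β : ℝ}

lemma neg_le_freeEnergy_of_lt_one (hρ : IsFiniteEntropyDensity (sphereMeasure F) ρ) (hβ0 : 0 ≤ β)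
    (hβ1 : β < 1) : -(1 + β) / 2 ≤ freeEnergy (sphereMeasure F) logChordSq β ρ := by
  let δ (u : ℝ) : ℝ := 2 * u + u ^ 2 / (2 * (1 - β))
  let κ : ℝ := (1 - log ((1 - β) / 2)) / ((1 - β) / 2)
  have hlim : Tendsto (fun u => -(1 + β) / 2 - 7 * u - β * (δ u ^ 2 + 2 * δ u * κ) - u ^ 3)
      (𝓝[>] 0) (𝓝 (-(1 + β) / 2)) := by
    have hcont : Continuous fun u =>
        -(1 + β) / 2 - 7 * u - β * (δ u ^ 2 + 2 * δ u * κ) - u ^ 3 := by fun_prop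
    simpa [δ] using (hcont.tendsto 0).mono_left nhdsWithin_le_nhds
  refine le_of_tendsto hlim ?_
  filter_upwards [Ioc_mem_nhdsGT (by norm_num : (0 : ℝ) < 1 / 4)] with u ⟨hu0, hu⟩
  obtain ⟨g, hg⟩ := exists_isAlmostMinimizer (pow_pos hu0 3)
    fun g (hg : IsFiniteEntropyDensity (sphereMeasure F) g) =>
      hg.log_one_sub_le_entropy_add hβ0 hβ1
  have hL := hg.neg_interaction_logChordSq_le (pow_le_one₀ hu0.le (by linarith)) hβ0 hβ1
  have hL0 : 0 ≤ -interaction (sphereMeasure F) logChordSq g := by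
    linarith [hg.interaction_logChordSq_le_neg_one]
  have ha : ‖barycenter (sphereMeasure F) invStereographic g‖ ≤ δ u := by
    refine le_of_mul_le_mul_left ((hg.mul_norm_barycenter_le hβ1 hu0.le (by linarith)).trans_eq ?_)
      hu0
    ring
  have herror : ‖barycenter (sphereMeasure F) invStereographic g‖ ^ 2
      + 2 * ‖barycenter (sphereMeasure F) invStereographic g‖
        * -interaction (sphereMeasure F) logChordSq g ≤ δ u ^ 2 + 2 * δ u * κ := by
    gcongr
  linarith [hg.neg_le_freeEnergy hβ0 hu0 hu, hg.freeEnergy_le ρ hρ,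
    mul_le_mul_of_nonneg_left herror hβ0]

lemma entropy_add_interaction_logChordSq_add_one_nonneg
    (hρ : IsFiniteEntropyDensity (sphereMeasure F) ρ) :
    0 ≤ entropy (sphereMeasure F) ρ + interaction (sphereMeasure F) logChordSq ρ + 1 := by
  have hlim : Tendsto (fun β => freeEnergy (sphereMeasure F) logChordSq β ρ + (1 + β) / 2) (𝓝[<] 1)
      (𝓝 (freeEnergy (sphereMeasure F) logChordSq 1 ρ + (1 + 1) / 2)) := by
    unfold freeEnergy
    exact (by fun_prop : Continuous fun β => entropy (sphereMeasure F) ρ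
      + β * interaction (sphereMeasure F) logChordSq ρ + (1 + β) / 2).tendsto 1 |>.mono_left
        nhdsWithin_le_nhds
  have hnonneg := ge_of_tendsto hlim (b := 0) (by
    filter_upwards [Ico_mem_nhdsLT (zero_lt_one' ℝ)] with β ⟨hβ0, hβ1⟩
    linarith [hρ.neg_le_freeEnergy_of_lt_one hβ0 hβ1])
  rw [freeEnergy] at hnonneg
  linarith

lemma ae_eq_one_of_entropy_add_eq_zero (hρ : IsFiniteEntropyDensity (sphereMeasure F) ρ) {α : ℝ}
    (hα : 0 < α) (h : entropy (sphereMeasure F) ρ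
      + (1 - α) * (interaction (sphereMeasure F) logChordSq ρ + 1) = 0) :
    ρ =ᵐ[sphereMeasure F] 1 := by
  refine hρ.ae_eq_one_of_entropy_nonpos ?_
  have hHLS := hρ.entropy_add_interaction_logChordSq_add_one_nonneg
  have hL := hρ.interaction_logChordSq_le_neg_one
  rcases le_total α 1 with hα1 | hα1
  · refine nonpos_of_mul_nonpos_right ?_ hα
    nlinarith
  · nlinarith

end IsFiniteEntropyDensity

end LogHLS

section PlanarDensity

lemma integrable_div_withDensity_iff {X : Type*} [MeasurableSpace X] {μ : Measure X} {w h : X → ℝ}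
    (hw : Measurable w) (hw0 : ∀ x, 0 < w x) :
    Integrable (fun x => h x / w x) (μ.withDensity fun x => ENNReal.ofReal (w x))
      ↔ Integrable h μ := by
  rw [integrable_withDensity_iff_integrable_smul' (by fun_prop) (by simp)]
  simp only [ENNReal.toReal_ofReal (hw0 _).le, smul_eq_mul, mul_div_cancel₀ _ (hw0 _).ne']

lemma integral_div_withDensity {X : Type*} [MeasurableSpace X] {μ : Measure X} {w : X → ℝ}
    (hw : Measurable w) (hw0 : ∀ x, 0 < w x) (h : X → ℝ) :
    ∫ x, h x / w x ∂(μ.withDensity fun x => ENNReal.ofReal (w x)) = ∫ x, h x ∂μ := by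
  rw [integral_withDensity_eq_integral_toReal_smul (by fun_prop) (by simp)]
  simp only [ENNReal.toReal_ofReal (hw0 _).le, smul_eq_mul, mul_div_cancel₀ _ (hw0 _).ne']

lemma mul_log_div_div {d : ℝ} (hd : d ≠ 0) (s : ℝ) :
    s / d * log (s / d) = (s * log s + -log d * s) / d := by
  rcases eq_or_ne s 0 with rfl | hs
  · simp
  · rw [log_div hs hd]
    ring

variable {F : Type*} [NormedAddCommGroup F]

lemma log_sphereDensity (x : F) : log (sphereDensity x) = -log π - 2 * log (1 + ‖x‖ ^ 2) := by
  rw [sphereDensity, one_div, log_inv, log_mul pi_ne_zero (by positivity), log_pow]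
  push_cast
  ring

variable [InnerProductSpace ℝ F] [FiniteDimensional ℝ F] [MeasurableSpace F] [BorelSpace F]
  {g : F → ℝ}

lemma sphereMeasure_prod_sphereMeasure :
    (sphereMeasure F).prod (sphereMeasure F)
      = volume.withDensity fun p : F × F =>
        ENNReal.ofReal (sphereDensity p.1 * sphereDensity p.2) := by
  rw [sphereMeasure, prod_withDensity (by fun_prop) (by fun_prop)]
  simp only [ENNReal.ofReal_mul (sphereDensity_pos _).le]
  rfl

lemma isFiniteEntropyDensity_div_sphereDensity (hg0 : 0 ≤ᵐ[volume] g) (hg : Integrable g)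
    (hg1 : ∫ x, g x = 1) (hlog : Integrable fun x => g x * log (g x))
    (hV : Integrable fun x => -log (sphereDensity x) * g x) :
    IsFiniteEntropyDensity (sphereMeasure F) fun x => g x / sphereDensity x where
  nonneg := by
    filter_upwards [(withDensity_absolutelyContinuous _ _).ae_le hg0] with x hx
    exact div_nonneg hx (sphereDensity_pos x).le
  integrable := (integrable_div_withDensity_iff (by fun_prop) sphereDensity_pos).2 hg
  integral_eq_one := (integral_div_withDensity (by fun_prop) sphereDensity_pos g).trans hg1
  integrable_mul_log := by
    simp only [mul_log_div_div (sphereDensity_pos _).ne']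
    exact (integrable_div_withDensity_iff (by fun_prop) sphereDensity_pos).2 (hlog.add hV)

lemma entropy_div_sphereDensity (hlog : Integrable fun x => g x * log (g x))
    (hV : Integrable fun x => -log (sphereDensity x) * g x) :
    entropy (sphereMeasure F) (fun x => g x / sphereDensity x)
      = (∫ x, g x * log (g x)) + ∫ x, -log (sphereDensity x) * g x := by
  simp only [entropy, mul_log_div_div (sphereDensity_pos _).ne']
  rw [← integral_add hlog hV]
  exact integral_div_withDensity (by fun_prop) sphereDensity_pos _

lemma interaction_logChordSq_div_sphereDensity [Fact (Module.finrank ℝ F = 2)]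
    (hg : Integrable g) (hg1 : ∫ x, g x = 1)
    (hV : Integrable fun x => -log (sphereDensity x) * g x)
    (hW : Integrable fun p : F × F => g p.1 * g p.2 * log ‖p.1 - p.2‖) :
    interaction (sphereMeasure F) logChordSq (fun x => g x / sphereDensity x)
      = 2 * (∫ p : F × F, g p.1 * g p.2 * log ‖p.1 - p.2‖)
        - (∫ x, -log (sphereDensity x) * g x) + log π := by
  have hfst := (hV.mul_prod hg).div_const 2
  have hsnd := (hg.mul_prod hV).div_const 2
  have hpi := (hg.mul_prod hg).mul_const (log π)
  have hrewrite : (fun p : F × F => g p.1 / sphereDensity p.1 * (g p.2 / sphereDensity p.2)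
      * logChordSq p.1 p.2) =ᵐ[(sphereMeasure F).prod (sphereMeasure F)] fun p =>
        (2 * (g p.1 * g p.2 * log ‖p.1 - p.2‖)
          - -log (sphereDensity p.1) * g p.1 * g p.2 / 2
          - g p.1 * (-log (sphereDensity p.2) * g p.2) / 2 + g p.1 * g p.2 * log π)
          / (sphereDensity p.1 * sphereDensity p.2) := by
    filter_upwards [ae_chordSq_pos] with p hp
    rw [logChordSq, log_chordSq fun h => hp.ne' (by simp [chordSq, h]), log_sphereDensity,
      log_sphereDensity]
    ring
  rw [interaction, integral_congr_ae hrewrite, sphereMeasure_prod_sphereMeasure]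
  refine (integral_div_withDensity (by fun_prop)
    (fun p => mul_pos (sphereDensity_pos _) (sphereDensity_pos _)) _).trans ?_
  refine (integral_add (((hW.const_mul 2).sub hfst).sub hsnd) hpi).trans ?_
  rw [integral_sub' ((hW.const_mul 2).sub hfst) hsnd, integral_sub' (hW.const_mul 2) hfst,
    integral_const_mul, integral_div, integral_div, integral_mul_const, Measure.volume_eq_prod,
    integral_prod_mul (fun x => -log (sphereDensity x) * g x) g,
    integral_prod_mul g fun x => -log (sphereDensity x) * g x, integral_prod_mul, hg1]
  ring

end PlanarDensity

lemma Vpot_eq_neg_log_sphereDensity (x : E2) : Vpot x = -log (sphereDensity x) := by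
  rw [log_sphereDensity, Vpot]
  ring

namespace Admissible

variable {f : E2 → ℝ}

lemma integrable_mul_log (hf : Admissible f) : Integrable fun x => f x * log (f x) := by
  obtain ⟨hmeas, -, -, hlog, -, -⟩ := hf
  exact hlog.mono (by fun_prop) (.of_forall fun x => by simp)

lemma integrable_mul_log_norm_sub (hf : Admissible f) :
    Integrable fun p : E2 × E2 => f p.1 * f p.2 * log ‖p.1 - p.2‖ := by
  obtain ⟨hmeas, -, -, -, -, hW⟩ := hf
  exact hW.mono (by fun_prop) (.of_forall fun p => by simp)

lemma const_mul (hf : Admissible f) {c : ℝ} (hc : 0 < c) : Admissible fun x => c * f x := by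
  have hlog := hf.integrable_mul_log
  obtain ⟨hmeas, hf0, hint, -, hV, hW⟩ := hf
  have hcf0 : ∀ᵐ x : E2, 0 ≤ c * f x := hf0.mono fun x hx => mul_nonneg hc.le hx
  have hscale (s : ℝ) : c * s * log (c * s) = c * (s * log s + log c * s) := by
    rcases eq_or_ne s 0 with rfl | hs
    · simp
    · rw [log_mul hc.ne' hs]
      ring
  refine ⟨hmeas.const_mul c, hcf0, hint.const_mul c, ?_, ?_, ?_⟩
  · refine (((hlog.add (hint.const_mul (log c))).const_mul c).abs).congr (hcf0.mono fun x hx => ?_)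
    simp only [Pi.add_apply, ← hscale]
    rw [abs_mul, abs_of_nonneg hx]
  · exact (hV.const_mul c).congr (.of_forall fun x => by ring)
  · exact (hW.const_mul (c ^ 2)).congr (.of_forall fun p => by ring)

lemma ae_eq_mu2_of_integral_eq_one (hf : Admissible f) (hf1 : ∫ x, f x = 1) {α : ℝ} (hα : 0 < α)
    (heq : (∫ x, f x * log (f x)) + α * (∫ x, Vpot x * f x) + (1 - α) * (1 + log π)
      = 2 * (α - 1) * ∫ p : E2 × E2, f p.1 * f p.2 * log ‖p.1 - p.2‖) :
    f =ᵐ[volume] mu2 := by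
  have : Fact (Module.finrank ℝ E2 = 2) := ⟨finrank_euclideanSpace_fin⟩
  have hlog := hf.integrable_mul_log
  have hW := hf.integrable_mul_log_norm_sub
  obtain ⟨-, hf0, hint, -, hV, -⟩ := hf
  simp only [Vpot_eq_neg_log_sphereDensity] at hV heq
  have hone := (isFiniteEntropyDensity_div_sphereDensity hf0 hint hf1 hlog
    hV).ae_eq_one_of_entropy_add_eq_zero hα (by
      rw [entropy_div_sphereDensity hlog hV,
        interaction_logChordSq_div_sphereDensity hint hf1 hV hW]
      linarith)
  filter_upwards [(withDensity_absolutelyContinuous' (by fun_prop) (.of_forall fun x =>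
    (ENNReal.ofReal_pos.2 (sphereDensity_pos x)).ne')).ae_le hone] with x hx
  exact (div_eq_one_iff_eq (sphereDensity_pos x).ne').1 hx

end Admissible

/-- Uniqueness of the optimal function in the generalized logarithmic HLS inequality. -/
theorem log_HLS_optimizer_unique (α M : ℝ) (hα : 0 < α) (hM : 0 < M)
    (f : E2 → ℝ) (hf : Admissible f) (hmass : ∫ x, f x = M)
    (heq : (∫ x, f x * Real.log (f x / M)) + α * (∫ x, Vpot x * f x)
        + M * (1 - α) * (1 + Real.log π)
      = (2 / M) * (α - 1) * ∫ p : E2 × E2, f p.1 * f p.2 * Real.log ‖p.1 - p.2‖) :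
    f =ᵐ[volume] fun x => M * mu2 x := by
  have hlog : ∫ x, M⁻¹ * f x * log (M⁻¹ * f x) = M⁻¹ * ∫ x, f x * log (f x / M) := by
    simp only [← integral_const_mul, mul_assoc, div_eq_inv_mul]
  have hV : ∫ x, Vpot x * (M⁻¹ * f x) = M⁻¹ * ∫ x, Vpot x * f x := by
    simp only [← integral_const_mul, mul_left_comm]
  have hW : ∫ p : E2 × E2, M⁻¹ * f p.1 * (M⁻¹ * f p.2) * log ‖p.1 - p.2‖
      = M⁻¹ ^ 2 * ∫ p : E2 × E2, f p.1 * f p.2 * log ‖p.1 - p.2‖ := by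
    rw [← integral_const_mul]
    congr 1 with p
    ring
  have hnormalized := (hf.const_mul (inv_pos.2 hM)).ae_eq_mu2_of_integral_eq_one
    (by rw [integral_const_mul, hmass, inv_mul_cancel₀ hM.ne']) hα (by
      rw [hlog, hV, hW]
      field_simp at heq ⊢
      linear_combination heq)
  filter_upwards [hnormalized] with x hx
  rw [← hx, mul_inv_cancel_left₀ hM.ne']
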